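/- Let ν ≥ 1, let N ⊆ ℝ^ν be a compact connected smooth embedded submanifold without boundary with base point b ∈ N, let m ≥ 2, let p be a real number, and let ℓ ∈ {1, …, m−1} satisfy ℓ < p − 1. Assume that the homotopy group π_ℓ(N, b) is infinite. Then there exists a sequence (u_j) of smooth maps u_j : B̄^{m−1} → N with u_j = b on the sphere S^{m−2}, such that liminf_{j→∞} E^{1−1/p, p}_{B^{m−1}}(u_j) > 0 and such that for every M > 0 there is J with E^{1,p}_ext(u_j) ≥ M · E^{1−1/p, p}_{B^{m−1}}(u_j) for all j ≥ J. -/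

import Mathlib

open Metric Set MeasureTheory Filter
open scoped ENNReal Topology

noncomputable section

/-- `N ⊆ ℝ^ν` is a smooth embedded submanifold without boundary: around each of its points
there is a smooth local diffeomorphism of the ambient space flattening `N` onto a
`d`-dimensional coordinate subspace. -/
def IsSmoothSubmanifold {ν : ℕ} (N : Set (EuclideanSpace ℝ (Fin ν))) : Prop :=
  ∃ d : ℕ, ∀ x ∈ N, ∃ (U V : Set (EuclideanSpace ℝ (Fin ν)))
      (φ ψ : EuclideanSpace ℝ (Fin ν) → EuclideanSpace ℝ (Fin ν)),
    IsOpen U ∧ IsOpen V ∧ x ∈ U ∧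
    ContDiffOn ℝ (⊤ : ℕ∞) φ U ∧ ContDiffOn ℝ (⊤ : ℕ∞) ψ V ∧
    MapsTo φ U V ∧ MapsTo ψ V U ∧
    (∀ y ∈ U, ψ (φ y) = y) ∧ (∀ z ∈ V, φ (ψ z) = z) ∧
    (∀ y ∈ U, (y ∈ N ↔ ∀ i : Fin ν, d ≤ (i : ℕ) → φ y i = 0))

/-- The Gagliardo fractional energy `E^{s,p}_A(u)`. -/
def gagliardoE {l ν : ℕ} (s p : ℝ) (A : Set (EuclideanSpace ℝ (Fin l)))
    (u : EuclideanSpace ℝ (Fin l) → EuclideanSpace ℝ (Fin ν)) : ℝ≥0∞ :=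
  ∫⁻ x in A, ∫⁻ y in A, ENNReal.ofReal (‖u y - u x‖ ^ p / ‖y - x‖ ^ ((l : ℝ) + s * p))

/-- `f` is `C^1` on the closed set `A` in the sense that it is (the restriction of)
a `C^1` map on an open neighborhood of `A`. -/
def C1OnNhd {E F : Type*} [NormedAddCommGroup E] [NormedSpace ℝ E]
    [NormedAddCommGroup F] [NormedSpace ℝ F] (f : E → F) (A : Set E) : Prop :=
  ∃ V : Set E, IsOpen V ∧ A ⊆ V ∧ ContDiffOn ℝ 1 f V

/-- `f` is `C^∞` on the closed set `A` in the sense that it is (the restriction of)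
a smooth map on an open neighborhood of `A`. -/
def SmoothOnNhd {E F : Type*} [NormedAddCommGroup E] [NormedSpace ℝ E]
    [NormedAddCommGroup F] [NormedSpace ℝ F] (f : E → F) (A : Set E) : Prop :=
  ∃ V : Set E, IsOpen V ∧ A ⊆ V ∧ ContDiffOn ℝ (⊤ : ℕ∞) f V

/-- The `C^1` extension `p`-energy `E^{1,p}_ext(u)` of a map `u : B̄^l → N`:
the infimum (in `ℝ≥0∞`, so `sInf ∅ = ∞`) of `∫_{B^l × (0,1)} ‖DU‖^p` over all `C^1` maps
`U : B̄^l × [0,1] → N` with `U(·,0) = u`. -/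
def extEnergy {l ν : ℕ} (p : ℝ) (N : Set (EuclideanSpace ℝ (Fin ν)))
    (u : EuclideanSpace ℝ (Fin l) → EuclideanSpace ℝ (Fin ν)) : ℝ≥0∞ :=
  sInf { e | ∃ U : EuclideanSpace ℝ (Fin l) × ℝ → EuclideanSpace ℝ (Fin ν),
    C1OnNhd U (closedBall 0 1 ×ˢ Icc (0 : ℝ) 1) ∧
    MapsTo U (closedBall 0 1 ×ˢ Icc (0 : ℝ) 1) N ∧
    (∀ x ∈ closedBall (0 : EuclideanSpace ℝ (Fin l)) 1, U (x, 0) = u x) ∧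
    e = ∫⁻ z in ball (0 : EuclideanSpace ℝ (Fin l)) 1 ×ˢ Ioo (0 : ℝ) 1,
          ENNReal.ofReal (‖fderiv ℝ U z‖ ^ p) }

/-- `f` and `g`, mapping `B̄^l` into `N` and agreeing on `S^{l-1}`, are homotopic within `N`
relative to the sphere `S^{l-1}`. -/
def HomotopicRelSphere {l ν : ℕ} (N : Set (EuclideanSpace ℝ (Fin ν)))
    (f g : EuclideanSpace ℝ (Fin l) → EuclideanSpace ℝ (Fin ν)) : Prop :=
  ∃ H : EuclideanSpace ℝ (Fin l) × ℝ → EuclideanSpace ℝ (Fin ν),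
    ContinuousOn H (closedBall 0 1 ×ˢ Icc (0 : ℝ) 1) ∧
    MapsTo H (closedBall 0 1 ×ˢ Icc (0 : ℝ) 1) N ∧
    (∀ x ∈ closedBall (0 : EuclideanSpace ℝ (Fin l)) 1, H (x, 0) = f x ∧ H (x, 1) = g x) ∧
    (∀ x ∈ sphere (0 : EuclideanSpace ℝ (Fin l)) 1, ∀ t ∈ Icc (0 : ℝ) 1, H (x, t) = f x)

/-- The topological `p`-energy `E^{1,p}_top(u)` of `u : B̄^l → N` with `u = b` on `S^{l-1}`:
the infimum (in `ℝ≥0∞`) of `∫_{B^l} ‖Dw‖^p` over all `C^1` maps `w : B̄^l → N` with `w = b` on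
`S^{l-1}` that are homotopic to `u` relative to `S^{l-1}`. -/
def topEnergy {l ν : ℕ} (p : ℝ) (N : Set (EuclideanSpace ℝ (Fin ν)))
    (b : EuclideanSpace ℝ (Fin ν))
    (u : EuclideanSpace ℝ (Fin l) → EuclideanSpace ℝ (Fin ν)) : ℝ≥0∞ :=
  sInf { e | ∃ w : EuclideanSpace ℝ (Fin l) → EuclideanSpace ℝ (Fin ν),
    C1OnNhd w (closedBall 0 1) ∧ MapsTo w (closedBall 0 1) N ∧
    (∀ x ∈ sphere (0 : EuclideanSpace ℝ (Fin l)) 1, w x = b) ∧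
    HomotopicRelSphere N w u ∧
    e = ∫⁻ x in ball (0 : EuclideanSpace ℝ (Fin l)) 1, ENNReal.ofReal (‖fderiv ℝ w x‖ ^ p) }

/-!
Write `ℝⁿ ≅ ℝᵏ × ℝᵈ` with `k + 1 = ℓ` and `d ≥ 1`. A loop `f` on the `(k + 1)`-cube is spread over
a tube by `w ↦ f (w.1, ‖w.2‖ - 10)`, and a fixed nonconstant loop `f₀`, spread over a smaller tube,
keeps the Gagliardo energy of the resulting map `u` bounded below.

Interpolating between the boundedness of `N` and the derivative of `u` gives
`E^{s,p}(u) ≤ C (1 + ∫ ‖Df‖^p)^s` with `s = 1 - 1/p`. On the other hand, restrict an extension `U`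
of `u` to a graph over an affine slice of the tube, whose height is constant inside the cube and
falls to `0` near its boundary: this is a loop in the homotopy class of `f`, since sliding the graph
down to height `0` restores `u`. Averaging over the slices and the heights shows that some such loop
has `p`-energy at most
`C (∫ ‖DU‖^p + 1)`, so that the least `p`-energy `e` of a loop in the class of `f` satisfies
`e ≤ C (E_ext(u) + 1)`.

By Morrey's inequality, `p > ℓ` forces loops of bounded `p`-energy to be equicontinuous and hence
to fall into finitely many homotopy classes. As `π_ℓ(N, b)` is infinite, `e` is unbounded; choosing
`f` smooth and almost minimal in its class, `E_ext(u)` is at least of order `e` while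
`E^{s,p}(u)` is at most of order `e^s` with `s < 1`.
-/

/-! ### The nearest-point retraction -/

section ImplicitFunction

variable {𝕜 E F G : Type*} [RCLike 𝕜] [NormedAddCommGroup E] [NormedSpace 𝕜 E]
  [NormedAddCommGroup F] [NormedSpace 𝕜 F] [CompleteSpace F] [NormedAddCommGroup G]
  [NormedSpace 𝕜 G]

theorem eventually_isInvertible_fderiv_comp_inr {f : E × F → G} {q : E × F}
    (hf : ContDiffAt 𝕜 1 f q) (hq : (fderiv 𝕜 f q ∘L .inr 𝕜 E F).IsInvertible) :
    ∀ᶠ q' in 𝓝 q, (fderiv 𝕜 f q' ∘L .inr 𝕜 E F).IsInvertible := by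
  obtain ⟨e, he⟩ := hq
  have hcont : ContinuousAt (fun q' => fderiv 𝕜 f q' ∘L .inr 𝕜 E F) q :=
    (hf.fderiv_right (m := 0) (by norm_num)).continuousAt.clm_comp continuousAt_const
  have hnhds := ContinuousLinearEquiv.nhds e
  rw [he] at hnhds
  exact hcont.eventually hnhds

variable [CompleteSpace E] [CompleteSpace G]

theorem contDiffAt_of_eventually_apply_eq {f : E × F → G} {g : E → F} {x : E} {n : WithTop ℕ∞}
    (hn : n ≠ 0) (hf : ContDiffAt 𝕜 n f (x, g x))
    (hinv : (fderiv 𝕜 f (x, g x) ∘L .inr 𝕜 E F).IsInvertible) (hg : ContinuousAt g x)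
    (hfg : ∀ᶠ y in 𝓝 x, f (y, g y) = f (x, g x)) : ContDiffAt 𝕜 n g x := by
  refine (hf.contDiffAt_implicitFunction hn hinv).congr_of_eventuallyEq ?_
  filter_upwards [hfg, (continuousAt_id.prodMk hg).eventually
    (hf.eventually_apply_eq_iff_implicitFunction hn hinv)] with y hy hiff
  exact (hiff.1 hy).symm

end ImplicitFunction

section NearestPoint

variable {ν d : ℕ} {N U V : Set (EuclideanSpace ℝ (Fin ν))}
  {φ ψ P : EuclideanSpace ℝ (Fin ν) → EuclideanSpace ℝ (Fin ν)}

/-- `φ : U → V`, with inverse `ψ`, is a chart of the ambient space straightening `N` to the span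
of the first `d` basis vectors, as in `IsSmoothSubmanifold`. -/
structure IsFlatteningChart (N : Set (EuclideanSpace ℝ (Fin ν))) (d : ℕ)
    (U V : Set (EuclideanSpace ℝ (Fin ν)))
    (φ ψ : EuclideanSpace ℝ (Fin ν) → EuclideanSpace ℝ (Fin ν)) : Prop where
  isOpen_source : IsOpen U
  isOpen_target : IsOpen V
  contDiffOn : ContDiffOn ℝ (⊤ : ℕ∞) φ U
  contDiffOn_symm : ContDiffOn ℝ (⊤ : ℕ∞) ψ V
  mapsTo : MapsTo φ U V
  mapsTo_symm : MapsTo ψ V U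
  left_inv : ∀ y ∈ U, ψ (φ y) = y
  right_inv : ∀ z ∈ V, φ (ψ z) = z
  mem_iff : ∀ y ∈ U, (y ∈ N ↔ ∀ i : Fin ν, d ≤ (i : ℕ) → φ y i = 0)

/-- `P x` is a point of `N` closest to `x`, for every `x`. -/
structure IsNearestPointMap (N : Set (EuclideanSpace ℝ (Fin ν)))
    (P : EuclideanSpace ℝ (Fin ν) → EuclideanSpace ℝ (Fin ν)) : Prop where
  mem : ∀ x, P x ∈ N
  dist_le : ∀ x, ∀ y ∈ N, dist x (P x) ≤ dist x y

/-- The normal equation in a flattening chart: if `ψ z` is a point of `N` closest to `x`, then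
`normalMap d ψ (x, z) = 0`. The first `d` components say that `x - ψ z` is orthogonal to `N` at
`ψ z`, the other ones that `ψ z ∈ N`. -/
def normalMap (d : ℕ) (ψ : EuclideanSpace ℝ (Fin ν) → EuclideanSpace ℝ (Fin ν))
    (q : EuclideanSpace ℝ (Fin ν) × EuclideanSpace ℝ (Fin ν)) : EuclideanSpace ℝ (Fin ν) :=
  WithLp.toLp 2 fun i : Fin ν => if (i : ℕ) < d then
    inner ℝ (q.1 - ψ q.2) (fderiv ℝ ψ q.2 (EuclideanSpace.single i 1)) else q.2 i

theorem contDiffAt_normalMap (d : ℕ) {q : EuclideanSpace ℝ (Fin ν) × EuclideanSpace ℝ (Fin ν)}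
    (hψ : ContDiffAt ℝ (⊤ : ℕ∞) ψ q.2) : ContDiffAt ℝ (⊤ : ℕ∞) (normalMap d ψ) q := by
  have hψ' : ContDiffAt ℝ (⊤ : ℕ∞) (fderiv ℝ ψ) q.2 := hψ.fderiv_right (by simp)
  rw [contDiffAt_euclidean]
  intro i
  by_cases hi : (i : ℕ) < d
  · simp only [normalMap, hi, if_true]
    exact (contDiffAt_fst.sub (hψ.comp q contDiffAt_snd)).inner ℝ
      ((hψ'.comp q contDiffAt_snd).clm_apply contDiffAt_const)
  · simp only [normalMap, hi, if_false]
    exact contDiffAt_euclidean.1 contDiffAt_snd i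

theorem fderiv_normalMap_inr (d : ℕ) {z : EuclideanSpace ℝ (Fin ν)}
    (hψ : ContDiffAt ℝ (⊤ : ℕ∞) ψ z) (h : EuclideanSpace ℝ (Fin ν)) :
    fderiv ℝ (normalMap d ψ) (ψ z, z) (0, h) = WithLp.toLp 2 fun i : Fin ν =>
      if (i : ℕ) < d then
        -inner ℝ (fderiv ℝ ψ z h) (fderiv ℝ ψ z (EuclideanSpace.single i 1)) else h i := by
  have hψ' : DifferentiableAt ℝ (fderiv ℝ ψ) z :=
    (hψ.fderiv_right (m := 1) (by norm_cast)).differentiableAt (by simp)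
  have hnormal : HasFDerivAt (fun w => normalMap d ψ (ψ z, w))
      (fderiv ℝ (normalMap d ψ) (ψ z, z) ∘L .inr ℝ _ _) z :=
    ((contDiffAt_normalMap d hψ).differentiableAt (by simp)).hasFDerivAt.comp z
      (hasFDerivAt_prodMk_right _ _)
  ext i
  have hcoord := congr($(((EuclideanSpace.proj (𝕜 := ℝ) i).hasFDerivAt.comp z hnormal).fderiv) h)
  change _ = fderiv ℝ (normalMap d ψ) (ψ z, z) (0, h) i at hcoord
  rw [← hcoord]
  by_cases hi : (i : ℕ) < d
  · have hinner := HasFDerivAt.inner ℝ ((hψ.differentiableAt (by simp)).hasFDerivAt.const_sub (ψ z))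
      (hψ'.hasFDerivAt.clm_apply (hasFDerivAt_const (EuclideanSpace.single i (1 : ℝ)) z))
    have heq : (EuclideanSpace.proj (𝕜 := ℝ) i) ∘ (fun w => normalMap d ψ (ψ z, w)) =
        fun w => inner ℝ (ψ z - ψ w) (fderiv ℝ ψ w (EuclideanSpace.single i 1)) := by
      ext w; simp [normalMap, hi]
    rw [heq, hinner.fderiv]
    simp [hi]
  · have heq : (EuclideanSpace.proj (𝕜 := ℝ) i) ∘ (fun w => normalMap d ψ (ψ z, w)) =
        EuclideanSpace.proj (𝕜 := ℝ) i := by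
      ext w; simp [normalMap, hi]
    rw [heq, ContinuousLinearMap.fderiv]
    simp [hi]

namespace IsFlatteningChart

theorem contDiffAt_symm (hc : IsFlatteningChart N d U V φ ψ) {z : EuclideanSpace ℝ (Fin ν)}
    (hz : z ∈ V) : ContDiffAt ℝ (⊤ : ℕ∞) ψ z :=
  hc.contDiffOn_symm.contDiffAt (hc.isOpen_target.mem_nhds hz)

theorem injective_fderiv_symm (hc : IsFlatteningChart N d U V φ ψ)
    {z : EuclideanSpace ℝ (Fin ν)} (hz : z ∈ V) : Function.Injective (fderiv ℝ ψ z) := by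
  have hφ : DifferentiableAt ℝ φ (ψ z) := (hc.contDiffOn.contDiffAt
    (hc.isOpen_source.mem_nhds (hc.mapsTo_symm hz))).differentiableAt (by simp)
  have hid : φ ∘ ψ =ᶠ[𝓝 z] id := by
    filter_upwards [hc.isOpen_target.mem_nhds hz] with w hw using hc.right_inv w hw
  have hcomp := fderiv_comp z hφ ((hc.contDiffAt_symm hz).differentiableAt (by simp))
  rw [hid.fderiv_eq, fderiv_id] at hcomp
  exact Function.LeftInverse.injective fun h => congr($hcomp.symm h)

theorem isInvertible_fderiv_normalMap (hc : IsFlatteningChart N d U V φ ψ)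
    {z : EuclideanSpace ℝ (Fin ν)} (hz : z ∈ V) :
    (fderiv ℝ (normalMap d ψ) (ψ z, z) ∘L .inr ℝ _ _).IsInvertible := by
  set L := fderiv ℝ (normalMap d ψ) (ψ z, z) ∘L .inr ℝ _ _
  have hinj : Function.Injective L := by
    rw [injective_iff_map_eq_zero]
    intro h hh
    change fderiv ℝ (normalMap d ψ) (ψ z, z) (0, h) = 0 at hh
    rw [fderiv_normalMap_inr d (hc.contDiffAt_symm hz)] at hh
    have hcoord (i : Fin ν) := congr(WithLp.ofLp $hh i)
    have hbasis : h = ∑ i, h i • EuclideanSpace.single i (1 : ℝ) := by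
      simpa using ((EuclideanSpace.basisFun (Fin ν) ℝ).sum_repr h).symm
    refine (injective_iff_map_eq_zero (fderiv ℝ ψ z)).1 (hc.injective_fderiv_symm hz) h ?_
    rw [← inner_self_eq_zero (𝕜 := ℝ)]
    nth_rw 2 [hbasis]
    rw [map_sum, inner_sum]
    refine Finset.sum_eq_zero fun i _ => ?_
    rw [map_smul, inner_smul_right]
    by_cases hi : (i : ℕ) < d
    · have : inner ℝ (fderiv ℝ ψ z h) (fderiv ℝ ψ z (EuclideanSpace.single i 1)) = 0 := by
        simpa [hi] using hcoord i
      rw [this, mul_zero]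
    · have : h i = 0 := by simpa [hi] using hcoord i
      rw [this, zero_mul]
  exact ⟨(LinearEquiv.ofInjectiveEndo L.toLinearMap hinj).toContinuousLinearEquiv, rfl⟩

theorem normalMap_nearestPoint_eq_zero (hc : IsFlatteningChart N d U V φ ψ)
    (hP : IsNearestPointMap N P) {x : EuclideanSpace ℝ (Fin ν)} (hx : P x ∈ U) :
    normalMap d ψ (x, φ (P x)) = 0 := by
  set z := φ (P x)
  have hz : z ∈ V := hc.mapsTo hx
  have hψz : ψ z = P x := hc.left_inv _ hx
  have hzN := (hc.mem_iff _ hx).1 (hP.mem x)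
  ext i
  by_cases hi : (i : ℕ) < d
  · set v := EuclideanSpace.single i (1 : ℝ)
    have hline : HasDerivAt (fun s : ℝ => z + s • v) v 0 := by
      simpa using ((hasDerivAt_id (0 : ℝ)).smul_const v).const_add z
    have hcurve : HasDerivAt (fun s : ℝ => ψ (z + s • v)) (fderiv ℝ ψ z v) 0 := by
      have hψ : HasFDerivAt ψ (fderiv ℝ ψ z) (z + (0 : ℝ) • v) := by
        simpa using ((hc.contDiffAt_symm hz).differentiableAt (by simp)).hasFDerivAt
      exact hψ.comp_hasDerivAt (0 : ℝ) hline
    have hmin : IsLocalMin (fun s : ℝ => ‖x - ψ (z + s • v)‖ ^ 2) 0 := by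
      have hlim : Tendsto (fun s : ℝ => z + s • v) (𝓝 0) (𝓝 z) := by
        simpa using hline.continuousAt.tendsto
      filter_upwards [hlim.eventually (hc.isOpen_target.mem_nhds hz)] with s hs
      have hmem : ψ (z + s • v) ∈ N := by
        rw [hc.mem_iff _ (hc.mapsTo_symm hs), hc.right_inv _ hs]
        intro j hj
        have hji : j ≠ i := by rintro rfl; omega
        simpa [v, hji] using hzN j hj
      have hle := hP.dist_le x _ hmem
      rw [dist_eq_norm, dist_eq_norm] at hle
      simp only [zero_smul, add_zero, hψz]
      gcongr
    have hzero := hmin.hasDerivAt_eq_zero (hcurve.const_sub x).norm_sq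
    simpa [normalMap, hi, v] using hzero
  · simpa [normalMap, hi] using hzN i (by omega)

end IsFlatteningChart

namespace IsNearestPointMap

theorem apply_of_mem (hP : IsNearestPointMap N P) {x : EuclideanSpace ℝ (Fin ν)} (hx : x ∈ N) :
    P x = x := by
  simpa [eq_comm] using hP.dist_le x x hx

theorem continuousAt (hP : IsNearestPointMap N P) {y : EuclideanSpace ℝ (Fin ν)} (hy : y ∈ N) :
    ContinuousAt P y := by
  refine continuousAt_of_locally_lipschitz one_pos 2 fun x _ => ?_
  have htriangle := dist_triangle_left (P x) y x
  rw [hP.apply_of_mem hy]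
  linarith [hP.dist_le x y hy]

theorem eventually_contDiffAt (hP : IsNearestPointMap N P) (hc : IsFlatteningChart N d U V φ ψ)
    {y : EuclideanSpace ℝ (Fin ν)} (hy : y ∈ N) (hyU : y ∈ U) :
    ∀ᶠ x in 𝓝 y, ContDiffAt ℝ (⊤ : ℕ∞) P x := by
  have hPy : P y = y := hP.apply_of_mem hy
  have hPU : ∀ᶠ x in 𝓝 y, P x ∈ U :=
    (hP.continuousAt hy).eventually (hPy.symm ▸ hc.isOpen_source.mem_nhds hyU)
  set g := φ ∘ P
  have hgy : ContinuousAt g y := ContinuousAt.comp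
    (hPy.symm ▸ hc.contDiffOn.continuousOn.continuousAt (hc.isOpen_source.mem_nhds hyU))
    (hP.continuousAt hy)
  have hsmooth {x : EuclideanSpace ℝ (Fin ν)} (hx : P x ∈ U) :
      ContDiffAt ℝ (⊤ : ℕ∞) (normalMap d ψ) (x, g x) :=
    contDiffAt_normalMap d (hc.contDiffAt_symm (hc.mapsTo hx))
  have hconst : ∀ᶠ x in 𝓝 y, ∀ᶠ x' in 𝓝 x, normalMap d ψ (x', g x') = normalMap d ψ (x, g x) := by
    filter_upwards [hPU.eventually_nhds] with x hx
    filter_upwards [hx] with x' hx'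
    exact (hc.normalMap_nearestPoint_eq_zero hP hx').trans
      (hc.normalMap_nearestPoint_eq_zero hP hx.self_of_nhds).symm
  have hinv : (fderiv ℝ (normalMap d ψ) (y, g y) ∘L .inr ℝ _ _).IsInvertible := by
    have := hc.isInvertible_fderiv_normalMap (hc.mapsTo hyU)
    rwa [hc.left_inv y hyU, ← congr(φ $hPy)] at this
  have hsmooth_y := (hsmooth hPU.self_of_nhds).of_le (show 1 ≤ ((⊤ : ℕ∞) : WithTop ℕ∞) by simp)
  have hg : ContDiffAt ℝ 1 g y :=
    contDiffAt_of_eventually_apply_eq one_ne_zero hsmooth_y hinv hgy hconst.self_of_nhds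
  filter_upwards [hPU.eventually_nhds, hconst, hg.eventually (by simp), (continuousAt_id.prodMk
    hgy).eventually (eventually_isInvertible_fderiv_comp_inr hsmooth_y hinv)]
    with x hx hconst_x hg_x hinv_x
  have hg_smooth : ContDiffAt ℝ (⊤ : ℕ∞) g x := contDiffAt_of_eventually_apply_eq (by simp)
    (hsmooth hx.self_of_nhds) hinv_x hg_x.continuousAt hconst_x
  have hψ := hc.contDiffAt_symm (hc.mapsTo hx.self_of_nhds)
  refine (hψ.comp x hg_smooth).congr_of_eventuallyEq ?_
  filter_upwards [hx] with x' hx' using (hc.left_inv _ hx').symm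

end IsNearestPointMap

/-- `P` is a retraction onto `N` which is smooth on the closed `δ`-neighbourhood of `N`. -/
structure IsSmoothRetraction (N : Set (EuclideanSpace ℝ (Fin ν))) (δ : ℝ)
    (P : EuclideanSpace ℝ (Fin ν) → EuclideanSpace ℝ (Fin ν)) : Prop where
  mem : ∀ x, P x ∈ N
  apply_of_mem : ∀ x ∈ N, P x = x
  contDiffAt : ∀ x, infDist x N ≤ δ → ContDiffAt ℝ (⊤ : ℕ∞) P x

theorem IsSmoothSubmanifold.exists_isSmoothRetraction (hN : IsSmoothSubmanifold N)
    (hcpt : IsCompact N) (hne : N.Nonempty) : ∃ δ > 0, ∃ P, IsSmoothRetraction N δ P := by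
  choose P hPN hPd using fun x => hcpt.exists_infDist_eq_dist hne x
  have hP : IsNearestPointMap N P :=
    ⟨hPN, fun x y hy => hPd x ▸ infDist_le_dist_of_mem hy⟩
  obtain ⟨d, hd⟩ := hN
  have hlocal : {x | ContDiffAt ℝ (⊤ : ℕ∞) P x} ∈ 𝓝ˢ N := by
    rw [mem_nhdsSet_iff_forall]
    intro y hy
    obtain ⟨U, V, φ, ψ, hU, hV, hyU, hφ, hψ, hφm, hψm, hl, hr, hmem⟩ := hd y hy
    exact hP.eventually_contDiffAt ⟨hU, hV, hφ, hψ, hφm, hψm, hl, hr, hmem⟩ hy hyU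
  obtain ⟨W, hW, hNW, hWs⟩ := mem_nhdsSet_iff_exists.1 hlocal
  obtain ⟨δ, hδ, hδW⟩ := hcpt.exists_cthickening_subset_open hW hNW
  exact ⟨δ, hδ, P, hPN, fun x => hP.apply_of_mem, fun x hx =>
    hWs (hδW ((ENNReal.le_ofReal_iff_toReal_le (infEDist_ne_top hne) hδ.le).2 hx))⟩

end NearestPoint

/-! ### Loops on the unit cube -/

/-- The space `ℝ^(k+1)`, written as a product. With its sup norm the closed unit ball is the cube
`[-1, 1]^(k+1)`. -/
abbrev CubeSpace (k : ℕ) := (Fin k → ℝ) × ℝ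

namespace CubeSpace

variable {k : ℕ}

/-- The affine identification of `[0, 1]^(k+1)` with the closed unit ball of `CubeSpace k`. -/
def ofCube (x : Fin (k + 1) → unitInterval) : CubeSpace k :=
  (fun i => 2 * (x i.succ : ℝ) - 1, 2 * (x 0 : ℝ) - 1)

/-- The left inverse of `CubeSpace.ofCube` clamping every coordinate to the unit interval. -/
def toCube (x : CubeSpace k) : Fin (k + 1) → unitInterval :=
  Fin.cases (projIcc 0 1 zero_le_one ((x.2 + 1) / 2))
    fun i => projIcc 0 1 zero_le_one ((x.1 i + 1) / 2)

theorem continuous_ofCube : Continuous (ofCube (k := k)) := by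
  unfold ofCube; fun_prop

theorem continuous_toCube : Continuous (toCube (k := k)) := by
  have hclamp {g : CubeSpace k → ℝ} (hg : Continuous g) :
      Continuous fun x => projIcc (0 : ℝ) 1 zero_le_one ((g x + 1) / 2) :=
    continuous_projIcc.comp (by fun_prop)
  exact continuous_pi (Fin.cases (hclamp continuous_snd) fun j => hclamp (by fun_prop))

theorem toCube_ofCube (x : Fin (k + 1) → unitInterval) : toCube (ofCube x) = x := by
  have hcoord (t : unitInterval) :
      projIcc (0 : ℝ) 1 zero_le_one ((2 * (t : ℝ) - 1 + 1) / 2) = t := by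
    rw [show (2 * (t : ℝ) - 1 + 1) / 2 = t by ring, projIcc_val]
  exact funext (Fin.cases (hcoord _) fun j => hcoord _)

theorem one_le_norm_ofCube {x : Fin (k + 1) → unitInterval}
    (hx : x ∈ Cube.boundary (Fin (k + 1))) : 1 ≤ ‖ofCube x‖ := by
  obtain ⟨i, hi⟩ := hx
  have habs : ‖2 * (x i : ℝ) - 1‖ = 1 := by
    rcases hi with h | h <;> norm_num [h]
  cases i using Fin.cases with
  | zero => exact habs.symm.le.trans (norm_snd_le (ofCube x))
  | succ j =>
    exact habs.symm.le.trans ((norm_le_pi_norm (ofCube x).1 j).trans (norm_fst_le (ofCube x)))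

theorem toCube_mem_boundary {x : CubeSpace k} (hx : 1 ≤ ‖x‖) :
    toCube x ∈ Cube.boundary (Fin (k + 1)) := by
  have hproj {t : ℝ} (ht : 1 ≤ ‖t‖) : projIcc (0 : ℝ) 1 zero_le_one ((t + 1) / 2) = 0 ∨
      projIcc (0 : ℝ) 1 zero_le_one ((t + 1) / 2) = 1 := by
    rcases le_abs.1 ht with h | h
    · exact .inr (projIcc_of_right_le _ (by linarith))
    · exact .inl (projIcc_of_le_left _ (by linarith))
  rcases le_max_iff.1 hx with h | h
  · obtain ⟨i, hi⟩ : ∃ i, 1 ≤ ‖x.1 i‖ := by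
      by_contra! hlt
      exact h.not_gt ((pi_norm_lt_iff one_pos).2 hlt)
    exact ⟨i.succ, hproj hi⟩
  · exact ⟨0, hproj h⟩

end CubeSpace

/-- Generalized loops in `N ⊆ F` based at `b`, as maps on all of `CubeSpace k` that are equal to `b`
off the open unit ball. -/
structure CubeLoop (k : ℕ) {F : Type*} [TopologicalSpace F] {N : Set F} (b : N) where
  toFun : CubeSpace k → F
  continuous_toFun : Continuous toFun
  mem' : ∀ x, toFun x ∈ N
  eq_base' : ∀ x, 1 ≤ ‖x‖ → toFun x = b

namespace CubeLoop

variable {k : ℕ}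

section Topological

variable {F : Type*} [TopologicalSpace F] {N : Set F} {b : N}

instance : FunLike (CubeLoop k b) (CubeSpace k) F where
  coe := toFun
  coe_injective := by rintro ⟨⟩ ⟨⟩ rfl; rfl

protected theorem continuous (f : CubeLoop k b) : Continuous f := f.continuous_toFun

theorem mem (f : CubeLoop k b) (x : CubeSpace k) : f x ∈ N := f.mem' x

theorem eq_base (f : CubeLoop k b) {x : CubeSpace k} (hx : 1 ≤ ‖x‖) : f x = b := f.eq_base' x hx

/-- The class in `π_(k+1)(N, b)` of a loop. -/
def homotopyClass (f : CubeLoop k b) : HomotopyGroup (Fin (k + 1)) N b :=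
  Quotient.mk _ ⟨⟨fun x => ⟨f (CubeSpace.ofCube x), f.mem _⟩,
    (f.continuous.comp CubeSpace.continuous_ofCube).subtype_mk _⟩,
    fun _ hx => Subtype.ext (f.eq_base (CubeSpace.one_le_norm_ofCube hx))⟩

theorem homotopyClass_eq_of_homotopy {f g : CubeLoop k b} (H : unitInterval × CubeSpace k → F)
    (hH : Continuous H) (hmem : ∀ q, H q ∈ N) (hbase : ∀ s x, 1 ≤ ‖x‖ → H (s, x) = b)
    (h0 : ∀ x, H (0, x) = f x) (h1 : ∀ x, H (1, x) = g x) :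
    f.homotopyClass = g.homotopyClass := by
  refine Quotient.sound ⟨⟨⟨⟨fun q => ⟨H (q.1, CubeSpace.ofCube q.2), hmem _⟩, ?_⟩,
    fun x => Subtype.ext (h0 _), fun x => Subtype.ext (h1 _)⟩, fun s x hx => Subtype.ext ?_⟩⟩
  · exact (hH.comp (continuous_fst.prodMk
      (CubeSpace.continuous_ofCube.comp continuous_snd))).subtype_mk _
  · have hnorm := CubeSpace.one_le_norm_ofCube hx
    exact (hbase s _ hnorm).trans (f.eq_base hnorm).symm

/-- The loop `x ↦ f (c • x)`. -/
def scale (f : CubeLoop k b) (c : ℝ) (hc : 1 ≤ c) : CubeLoop k b where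
  toFun x := f (c • x)
  continuous_toFun := f.continuous.comp (continuous_const_smul c)
  mem' _ := f.mem _
  eq_base' x hx := f.eq_base <| by
    rw [norm_smul, Real.norm_of_nonneg (by positivity)]
    exact one_le_mul_of_one_le_of_one_le hc hx

theorem scale_apply (f : CubeLoop k b) {c : ℝ} (hc : 1 ≤ c) (x : CubeSpace k) :
    f.scale c hc x = f (c • x) := rfl

theorem homotopyClass_scale (f : CubeLoop k b) {c : ℝ} (hc : 1 ≤ c) :
    (f.scale c hc).homotopyClass = f.homotopyClass := by
  have hfactor (s : unitInterval) : 1 ≤ 1 + (s : ℝ) * (c - 1) :=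
    le_add_of_nonneg_right (mul_nonneg s.2.1 (sub_nonneg.2 hc))
  refine (homotopyClass_eq_of_homotopy (fun q => f.scale _ (hfactor q.1) q.2) ?_
    (fun _ => mem _ _) (fun _ _ => eq_base _) (fun x => ?_) fun x => ?_).symm
  · exact f.continuous.comp (by fun_prop)
  · simp [scale_apply]
  · simp [scale_apply]

theorem homotopyClass_surjective : Function.Surjective (homotopyClass (k := k) (b := b)) := by
  intro α
  induction α using Quotient.inductionOn with
  | h p =>
    refine ⟨⟨fun x => p (CubeSpace.toCube x), continuous_subtype_val.comp
      (p.1.continuous.comp CubeSpace.continuous_toCube), fun x => (p _).2,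
      fun x hx => congrArg Subtype.val (p.2 _ (CubeSpace.toCube_mem_boundary hx))⟩, ?_⟩
    refine congrArg (Quotient.mk _) (GenLoop.ext _ _ fun x => Subtype.ext ?_)
    exact congr((p $(CubeSpace.toCube_ofCube x) : F))

end Topological

section Retraction

variable {ν : ℕ} {N : Set (EuclideanSpace ℝ (Fin ν))} {b : N} {δ : ℝ}
  {P : EuclideanSpace ℝ (Fin ν) → EuclideanSpace ℝ (Fin ν)}

theorem exists_eq_comp_of_dist_le (hP : IsSmoothRetraction N δ P) (f : CubeLoop k b)
    {F : CubeSpace k → EuclideanSpace ℝ (Fin ν)} (hF : Continuous F)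
    (hbase : ∀ x, 1 ≤ ‖x‖ → F x = b) (hdist : ∀ x, dist (F x) (f x) ≤ δ) :
    ∃ g : CubeLoop k b, ⇑g = P ∘ F ∧ g.homotopyClass = f.homotopyClass := by
  let line : unitInterval × CubeSpace k → EuclideanSpace ℝ (Fin ν) :=
    fun q => f q.2 + (q.1 : ℝ) • (F q.2 - f q.2)
  have hline : Continuous line := by
    have := f.continuous
    fun_prop
  have hnear (q : unitInterval × CubeSpace k) : infDist (line q) N ≤ δ := by
    refine (infDist_le_dist_of_mem (f.mem q.2)).trans ?_
    rw [dist_eq_norm, add_sub_cancel_left, norm_smul, Real.norm_of_nonneg q.1.2.1, ← dist_eq_norm]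
    exact (mul_le_of_le_one_left dist_nonneg q.1.2.2).trans (hdist q.2)
  have hH : Continuous (P ∘ line) := continuous_iff_continuousAt.2 fun q =>
    (hP.contDiffAt _ (hnear q)).continuousAt.comp hline.continuousAt
  have hPb : P b = b := hP.apply_of_mem b b.2
  refine ⟨⟨P ∘ F, ?_, fun x => hP.mem _, fun x hx => ?_⟩, rfl, (homotopyClass_eq_of_homotopy _ hH
    (fun q => hP.mem _) (fun s x hx => ?_) (fun x => ?_) fun x => ?_).symm⟩
  · simpa [Function.comp_def, line] using hH.comp (Continuous.prodMk_right (1 : unitInterval))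
  · simp [hbase x hx, hPb]
  · simp [line, hbase x hx, f.eq_base hx, hPb]
  · simp [line, hP.apply_of_mem _ (f.mem x)]
  · simp [line, DFunLike.coe]

theorem homotopyClass_eq_of_dist_le (hP : IsSmoothRetraction N δ P) {f g : CubeLoop k b}
    (hdist : ∀ x, dist (f x) (g x) ≤ δ) : f.homotopyClass = g.homotopyClass := by
  obtain ⟨f', hf', hclass⟩ :=
    g.exists_eq_comp_of_dist_le hP f.continuous (fun _ => f.eq_base) hdist
  have : f' = f := DFunLike.ext _ _ fun x => by simp [hf', hP.apply_of_mem _ (f.mem x)]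
  rwa [this] at hclass

end Retraction

end CubeLoop

/-! ### The `p`-energy and smoothing -/

theorem mul_add_le_add_mul_add_one {R : Type*} [CommSemiring R] [PartialOrder R]
    [IsOrderedRing R] [CanonicallyOrderedAdd R] (a b x : R) : a * x + b ≤ (a + b) * (x + 1) :=
  calc a * x + b ≤ (a + b) * x + (a + b) :=
        add_le_add (mul_le_mul_of_nonneg_right le_self_add (zero_le (a := x))) le_add_self
    _ = (a + b) * (x + 1) := by rw [mul_add, mul_one]

instance isAddHaarMeasure_volume_prod {E F : Type*} [AddGroup E] [TopologicalSpace E]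
    [MeasureSpace E] [BorelSpace E] [AddGroup F] [TopologicalSpace F] [MeasureSpace F]
    [BorelSpace F] [IsTopologicalAddGroup E] [IsTopologicalAddGroup F]
    [SecondCountableTopology E] [SecondCountableTopology F]
    [SFinite (volume : Measure E)] [SFinite (volume : Measure F)]
    [(volume : Measure E).IsAddHaarMeasure] [(volume : Measure F).IsAddHaarMeasure] :
    (volume : Measure (E × F)).IsAddHaarMeasure := by
  rw [Measure.volume_eq_prod]; infer_instance

theorem exists_lintegral_comp_continuousLinearEquiv_eq {V W : Type*}
    [NormedAddCommGroup V] [NormedSpace ℝ V] [MeasureSpace V] [BorelSpace V]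
    [FiniteDimensional ℝ V] [(volume : Measure V).IsAddHaarMeasure]
    [NormedAddCommGroup W] [NormedSpace ℝ W] [MeasureSpace W] [BorelSpace W]
    [FiniteDimensional ℝ W] [(volume : Measure W).IsAddHaarMeasure] (e : V ≃L[ℝ] W) :
    ∃ c : ℝ≥0∞, c ≠ ⊤ ∧ ∀ g : W → ℝ≥0∞, ∫⁻ x, g (e x) = c * ∫⁻ w, g w := by
  have : (Measure.map e (volume : Measure V)).IsAddHaarMeasure := e.isAddHaarMeasure_map volume
  have : ProperSpace W := FiniteDimensional.proper_real W
  refine ⟨((volume.map e).addHaarScalarFactor volume : NNReal), ENNReal.coe_ne_top, fun g => ?_⟩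
  rw [← smul_eq_mul, ← lintegral_smul_measure, ← ENNReal.smul_def,
    ← Measure.isAddLeftInvariant_eq_smul (volume.map e) (volume : Measure W)]
  exact (lintegral_map_equiv g e.toHomeomorph.toMeasurableEquiv).symm

section Energy

variable {E F : Type*} [NormedAddCommGroup E] [NormedSpace ℝ E] [MeasureSpace E]
  [NormedAddCommGroup F] [NormedSpace ℝ F] {p : ℝ}

omit [MeasureSpace E] in
theorem enorm_fderiv_rpow_eq_zero (hp : 0 < p) {f : E → F} {x : E} (hx : fderiv ℝ f x = 0) :
    ‖fderiv ℝ f x‖ₑ ^ p = 0 := by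
  rw [hx, ← ofReal_norm, norm_zero, ENNReal.ofReal_zero, ENNReal.zero_rpow_of_pos hp]

/-- The `p`-energy `∫ ‖Df‖ ^ p` of a map defined on the whole space. -/
def dirichletEnergy (p : ℝ) (f : E → F) : ℝ≥0∞ := ∫⁻ x, ‖fderiv ℝ f x‖ₑ ^ p

theorem dirichletEnergy_ne_top [BorelSpace E] [IsFiniteMeasureOnCompacts (volume : Measure E)]
    (hp : 0 < p) {f : E → F} (hf : ContDiff ℝ 1 f) (hsupp : HasCompactSupport (fderiv ℝ f)) :
    dirichletEnergy p f ≠ ⊤ := by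
  obtain ⟨K, hK⟩ := (hf.continuous_fderiv one_ne_zero).bounded_above_of_compact_support hsupp
  have hle : dirichletEnergy p f ≤ ∫⁻ _ in tsupport (fderiv ℝ f), ENNReal.ofReal K ^ p := by
    rw [← lintegral_indicator (isClosed_tsupport _).measurableSet]
    refine lintegral_mono fun x => ?_
    by_cases hx : x ∈ tsupport (fderiv ℝ f)
    · rw [indicator_of_mem hx, ← ofReal_norm]
      gcongr
      exact hK x
    · exact (enorm_fderiv_rpow_eq_zero hp (image_eq_zero_of_notMem_tsupport hx)).trans_le zero_le
  refine (hle.trans_lt ?_).ne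
  rw [setLIntegral_const]
  exact ENNReal.mul_lt_top (by finiteness) hsupp.measure_lt_top

theorem exists_dirichletEnergy_comp_equiv_le [BorelSpace E] [FiniteDimensional ℝ E]
    [(volume : Measure E).IsAddHaarMeasure] {E' : Type*} [NormedAddCommGroup E']
    [NormedSpace ℝ E'] [MeasureSpace E'] [BorelSpace E'] [FiniteDimensional ℝ E']
    [(volume : Measure E').IsAddHaarMeasure] (hp : 0 ≤ p) (e : E' ≃L[ℝ] E) :
    ∃ C : ℝ≥0∞, C ≠ ⊤ ∧
      ∀ f : E → F, dirichletEnergy p (f ∘ e) ≤ C * dirichletEnergy p f := by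
  obtain ⟨c, hc, hcomp⟩ := exists_lintegral_comp_continuousLinearEquiv_eq e
  refine ⟨‖(e : E' →L[ℝ] E)‖ₑ ^ p * c, by finiteness, fun f => ?_⟩
  calc dirichletEnergy p (f ∘ e)
      ≤ ∫⁻ x, ‖(e : E' →L[ℝ] E)‖ₑ ^ p * ‖fderiv ℝ f (e x)‖ₑ ^ p := by
        refine lintegral_mono fun x => ?_
        rw [e.comp_right_fderiv, mul_comm, ← ENNReal.mul_rpow_of_nonneg _ _ hp]
        gcongr
        exact ContinuousLinearMap.opENorm_comp_le _ _
    _ = ‖(e : E' →L[ℝ] E)‖ₑ ^ p * c * dirichletEnergy p f := by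
        rw [lintegral_const_mul' _ _ (by finiteness), hcomp fun x => ‖fderiv ℝ f x‖ₑ ^ p,
          mul_assoc, dirichletEnergy]

end Energy

section Mollification

variable {E F : Type*} [NormedAddCommGroup E] [NormedSpace ℝ E] [FiniteDimensional ℝ E]
  [MeasurableSpace E] [BorelSpace E] {μ : Measure E} [μ.IsAddHaarMeasure]
  [NormedAddCommGroup F] [NormedSpace ℝ F]

open scoped Convolution

theorem fderiv_normed_convolution (φ : ContDiffBump (0 : E)) {f : E → F} (hf : ContDiff ℝ 1 f)
    (hsupp : HasCompactSupport f) (x : E) :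
    fderiv ℝ (φ.normed μ ⋆[ContinuousLinearMap.lsmul ℝ ℝ, μ] f) x =
      (φ.normed μ ⋆[ContinuousLinearMap.lsmul ℝ ℝ, μ] fderiv ℝ f) x := by
  rw [(hsupp.hasFDerivAt_convolution_right _ φ.continuous_normed.locallyIntegrable hf x).fderiv]
  exact integral_congr_ae (.of_forall fun _ => rfl)

theorem exists_forall_dist_normed_convolution_le [CompleteSpace F] {f : E → F}
    (hf : UniformContinuous f) {ε : ℝ} (hε : 0 < ε) :
    ∃ r > 0, ∀ φ : ContDiffBump (0 : E), φ.rOut ≤ r → ∀ x,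
      dist ((φ.normed μ ⋆[ContinuousLinearMap.lsmul ℝ ℝ, μ] f) x) (f x) ≤ ε := by
  obtain ⟨r, hr, hfr⟩ := Metric.uniformContinuous_iff.1 hf ε hε
  exact ⟨r, hr, fun φ hφ x => φ.dist_normed_convolution_le hf.continuous.aestronglyMeasurable
    fun y hy => (hfr ((mem_ball.1 hy).trans_le hφ)).le⟩

theorem exists_contDiff_dist_le_dist_fderiv_le [CompleteSpace F] {f : E → F} (hf : Continuous f)
    (hsupp : HasCompactSupport f) {ε r : ℝ} (hε : 0 < ε) (hr : 0 < r) :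
    ∃ g : E → F, ContDiff ℝ (⊤ : ℕ∞) g ∧ (∀ x, (∀ y ∈ ball x r, f y = 0) → g x = 0) ∧
      (∀ x, dist (g x) (f x) ≤ ε) ∧
      (ContDiff ℝ 1 f → ∀ x, dist (fderiv ℝ g x) (fderiv ℝ f x) ≤ ε) := by
  let μ : Measure E := Measure.addHaar
  obtain ⟨r₀, hr₀, hf₀⟩ := exists_forall_dist_normed_convolution_le (μ := μ)
    (hsupp.uniformContinuous_of_continuous hf) hε
  obtain ⟨r₁, hr₁, hf₁⟩ : ∃ r₁ > 0, ContDiff ℝ 1 f → ∀ φ : ContDiffBump (0 : E), φ.rOut ≤ r₁ →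
      ∀ x, dist ((φ.normed μ ⋆[ContinuousLinearMap.lsmul ℝ ℝ, μ] fderiv ℝ f) x)
        (fderiv ℝ f x) ≤ ε := by
    by_cases h : ContDiff ℝ 1 f
    · obtain ⟨r₁, hr₁, hf₁⟩ := exists_forall_dist_normed_convolution_le (μ := μ)
        ((hsupp.fderiv ℝ).uniformContinuous_of_continuous (h.continuous_fderiv one_ne_zero)) hε
      exact ⟨r₁, hr₁, fun _ => hf₁⟩
    · exact ⟨1, one_pos, fun h' => absurd h' h⟩
  let R := min r (min r₀ r₁)
  have hR : 0 < R := by positivity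
  let φ : ContDiffBump (0 : E) := ⟨R / 2, R, by positivity, by linarith⟩
  refine ⟨φ.normed μ ⋆[ContinuousLinearMap.lsmul ℝ ℝ, μ] f, ?_, fun x hx => ?_,
    hf₀ φ ((min_le_right _ _).trans (min_le_left _ _)), fun h x => ?_⟩
  · exact φ.hasCompactSupport_normed.contDiff_convolution_left _ φ.contDiff_normed
      hf.locallyIntegrable
  · rw [φ.normed_convolution_eq_right (x₀ := x) (g := f)]
    · exact hx x (mem_ball_self hr)
    · intro y hy
      rw [hx x (mem_ball_self hr), hx y (ball_subset_ball (min_le_left _ _) hy)]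
  · rw [fderiv_normed_convolution φ h hsupp]
    exact hf₁ h φ ((min_le_right _ _).trans (min_le_right _ _)) x

end Mollification

section SmoothLoops

variable {ν k : ℕ} {N : Set (EuclideanSpace ℝ (Fin ν))} {b : N} {p : ℝ}

theorem CubeLoop.fderiv_eq_zero (f : CubeLoop k b) {x : CubeSpace k} (hx : 1 < ‖x‖) :
    fderiv ℝ f x = 0 := by
  have hconst : ⇑f =ᶠ[𝓝 x] fun _ => (b : EuclideanSpace ℝ (Fin ν)) := by
    filter_upwards [(isOpen_lt continuous_const continuous_norm).mem_nhds hx] with y hy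
    exact f.eq_base (le_of_lt hy)
  rw [hconst.fderiv_eq, fderiv_const_apply]

theorem CubeLoop.dirichletEnergy_ne_top (hp : 0 < p) {f : CubeLoop k b} (hf : ContDiff ℝ 1 f) :
    dirichletEnergy p f ≠ ⊤ :=
  _root_.dirichletEnergy_ne_top hp hf <| .intro (isCompact_closedBall (0 : CubeSpace k) 1)
    fun _ hx => f.fderiv_eq_zero (by simpa using hx)

theorem CubeLoop.dirichletEnergy_eq_setLIntegral (hp : 0 < p) (f : CubeLoop k b) :
    dirichletEnergy p f = ∫⁻ x in ball 0 1, ‖fderiv ℝ f x‖ₑ ^ p := by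
  have hball : ∀ᵐ x : CubeSpace k, x ∉ ball 0 1 → ‖fderiv ℝ f x‖ₑ ^ p = 0 := by
    filter_upwards [measure_eq_zero_iff_ae_notMem.1 (Measure.addHaar_sphere volume 0 1)]
      with x hsphere hx
    have hlt : 1 < ‖x‖ := lt_of_le_of_ne (by simpa using hx) fun h => hsphere (by simp [← h])
    exact enorm_fderiv_rpow_eq_zero hp (f.fderiv_eq_zero hlt)
  rw [dirichletEnergy, ← lintegral_indicator measurableSet_ball]
  refine lintegral_congr_ae ?_
  filter_upwards [hball] with x hx
  by_cases h : x ∈ ball 0 1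
  · rw [indicator_of_mem h]
  · rw [indicator_of_notMem h, hx h]

theorem IsSmoothRetraction.exists_norm_fderiv_le {δ : ℝ}
    {P : EuclideanSpace ℝ (Fin ν) → EuclideanSpace ℝ (Fin ν)} (hP : IsSmoothRetraction N δ P)
    (hN : IsCompact N) : ∃ L, ∀ x, infDist x N ≤ δ → ‖fderiv ℝ P x‖ ≤ L := by
  have hne : N.Nonempty := ⟨P 0, hP.mem 0⟩
  rcases lt_or_ge δ 0 with hδ | hδ
  · exact ⟨0, fun x hx => absurd (infDist_nonneg.trans hx) hδ.not_ge⟩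
  have hnhd : {x | infDist x N ≤ δ} = cthickening δ N := by
    ext x
    exact (ENNReal.le_ofReal_iff_toReal_le (infEDist_ne_top hne) hδ).symm
  have hcompact : IsCompact {x | infDist x N ≤ δ} := hnhd ▸ hN.cthickening
  obtain ⟨L, hL⟩ := hcompact.exists_bound_of_continuousOn fun x hx =>
    ((hP.contDiffAt x hx).fderiv_right (m := 0) (by norm_num)).continuousAt.continuousWithinAt
  exact ⟨L, hL⟩

theorem CubeLoop.exists_dirichletEnergy_le_of_enorm_fderiv_le (hp : 1 ≤ p) {L : ℝ≥0∞}
    (hL : L ≠ ⊤) : ∃ C : ℝ≥0∞, C ≠ ⊤ ∧ ∀ f g : CubeLoop k b,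
      (∀ x, ‖fderiv ℝ g x‖ₑ ≤ L * (‖fderiv ℝ f x‖ₑ + 1)) →
      dirichletEnergy p g ≤ C * (dirichletEnergy p f + 1) := by
  have hp₀ : 0 < p := one_pos.trans_le hp
  have hvol : volume (ball (0 : CubeSpace k) 1) ≠ ⊤ := measure_ball_lt_top.ne
  let A := L ^ p * 2 ^ (p - 1)
  have hA : A ≠ ⊤ := by finiteness
  refine ⟨A * (1 + volume (ball (0 : CubeSpace k) 1)), by finiteness, fun f g hfg => ?_⟩
  calc dirichletEnergy p g
      = ∫⁻ x in ball 0 1, ‖fderiv ℝ g x‖ₑ ^ p := g.dirichletEnergy_eq_setLIntegral hp₀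
    _ ≤ ∫⁻ x in ball 0 1, A * (‖fderiv ℝ f x‖ₑ ^ p + 1) := lintegral_mono fun x => by
        calc ‖fderiv ℝ g x‖ₑ ^ p
            ≤ (L * (‖fderiv ℝ f x‖ₑ + 1)) ^ p := by gcongr; exact hfg x
          _ = L ^ p * (‖fderiv ℝ f x‖ₑ + 1) ^ p := ENNReal.mul_rpow_of_nonneg _ _ hp₀.le
          _ ≤ A * (‖fderiv ℝ f x‖ₑ ^ p + 1) := by
            rw [mul_assoc]
            gcongr
            simpa using ENNReal.rpow_add_le_mul_rpow_add_rpow ‖fderiv ℝ f x‖ₑ 1 hp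
    _ = A * (dirichletEnergy p f + volume (ball (0 : CubeSpace k) 1)) := by
        rw [lintegral_const_mul' _ _ hA, lintegral_add_right _ measurable_const,
          ← f.dirichletEnergy_eq_setLIntegral hp₀, setLIntegral_one]
    _ ≤ A * (1 + volume (ball (0 : CubeSpace k) 1)) * (dirichletEnergy p f + 1) := by
        rw [mul_assoc A]
        refine mul_le_mul_right ?_ A
        simpa using mul_add_le_add_mul_add_one 1 (volume (ball (0 : CubeSpace k) 1))
          (dirichletEnergy p f)

/-- Mollify in the ambient space, then project back to `N`; vanishing near the boundary of the cube
leaves room for the mollification. -/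
theorem CubeLoop.exists_smooth_of_eq_base {δ L : ℝ}
    {P : EuclideanSpace ℝ (Fin ν) → EuclideanSpace ℝ (Fin ν)} (hP : IsSmoothRetraction N δ P)
    (hδ : 0 < δ) (hL : ∀ x, infDist x N ≤ δ → ‖fderiv ℝ P x‖ ≤ L) (f : CubeLoop k b)
    (hf : ∀ x, 1 / 2 ≤ ‖x‖ → f x = b) : ∃ g : CubeLoop k b,
      ContDiff ℝ (⊤ : ℕ∞) g ∧ g.homotopyClass = f.homotopyClass ∧
      (ContDiff ℝ 1 f → ∀ x, ‖fderiv ℝ g x‖ₑ ≤ ENNReal.ofReal L * (‖fderiv ℝ f x‖ₑ + 1)) := by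
  have hsupp : HasCompactSupport fun x => f x - b :=
    .intro (isCompact_closedBall (0 : CubeSpace k) 1) fun x hx => by
      rw [f.eq_base (by simpa using (not_le.1 (mt mem_closedBall_iff_norm.2 hx)).le), sub_self]
  obtain ⟨G, hG, hG₀, hdist, hderiv⟩ := exists_contDiff_dist_le_dist_fderiv_le
    (f := fun x => f x - b) (f.continuous.sub continuous_const) hsupp (lt_min hδ one_pos)
    one_half_pos
  let F : CubeSpace k → EuclideanSpace ℝ (Fin ν) := fun x => G x + b
  have hF : ContDiff ℝ (⊤ : ℕ∞) F := hG.add contDiff_const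
  have hdistF (x) : dist (F x) (f x) ≤ min δ 1 := by
    simpa [F, dist_eq_norm, sub_sub_eq_add_sub] using hdist x
  have hinf (x) : infDist (F x) N ≤ δ :=
    (infDist_le_dist_of_mem (f.mem x)).trans ((hdistF x).trans (min_le_left _ _))
  have hbase (x : CubeSpace k) (hx : 1 ≤ ‖x‖) : F x = b := by
    have : G x = 0 := hG₀ x fun y hy => by
      have := norm_sub_norm_le x y
      rw [mem_ball, dist_comm, dist_eq_norm] at hy
      rw [hf y (by linarith), sub_self]
    rw [show F x = G x + b from rfl, this, zero_add]
  obtain ⟨g, hg, hclass⟩ := exists_eq_comp_of_dist_le hP f hF.continuous hbase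
    fun x => (hdistF x).trans (min_le_left _ _)
  have hPF (x) : ContDiffAt ℝ (⊤ : ℕ∞) P (F x) := hP.contDiffAt _ (hinf x)
  refine ⟨g, hg ▸ contDiff_iff_contDiffAt.2 fun x => (hPF x).comp x hF.contDiffAt, hclass,
    fun hf₁ x => ?_⟩
  have hchain : fderiv ℝ g x = (fderiv ℝ P (F x)).comp (fderiv ℝ G x) := by
    rw [hg, fderiv_comp _ ((hPF x).differentiableAt (by simp)) (hF.differentiable (by simp) x),
      fderiv_add_const]
  have hle : ‖fderiv ℝ G x‖ ≤ ‖fderiv ℝ f x‖ + 1 := by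
    have := hderiv (hf₁.sub contDiff_const) x
    rw [fderiv_sub_const, dist_eq_norm] at this
    linarith [norm_sub_norm_le (fderiv ℝ G x) (fderiv ℝ f x), min_le_right δ 1]
  calc ‖fderiv ℝ g x‖ₑ ≤ ‖fderiv ℝ P (F x)‖ₑ * ‖fderiv ℝ G x‖ₑ :=
        hchain ▸ ContinuousLinearMap.opENorm_comp_le _ _
    _ ≤ ENNReal.ofReal L * (‖fderiv ℝ f x‖ₑ + 1) := by
        simp only [← ofReal_norm]
        rw [← ENNReal.ofReal_one, ← ENNReal.ofReal_add (norm_nonneg _) zero_le_one]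
        gcongr
        exact hL _ (hinf x)

theorem CubeLoop.exists_smooth_homotopyClass_eq (hN : IsCompact N) (hsub : IsSmoothSubmanifold N)
    (hp : 1 ≤ p) : ∃ C : ℝ≥0∞, C ≠ ⊤ ∧ ∀ f : CubeLoop k b, ∃ g : CubeLoop k b,
      ContDiff ℝ (⊤ : ℕ∞) g ∧ g.homotopyClass = f.homotopyClass ∧
      (ContDiff ℝ 1 f → dirichletEnergy p g ≤ C * (dirichletEnergy p f + 1)) := by
  obtain ⟨δ, hδ, P, hP⟩ := hsub.exists_isSmoothRetraction hN ⟨b, b.2⟩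
  obtain ⟨L, hL⟩ := hP.exists_norm_fderiv_le hN
  obtain ⟨C₁, hC₁, hle₁⟩ := exists_dirichletEnergy_le_of_enorm_fderiv_le (k := k) (b := b) hp
    (ENNReal.ofReal_ne_top (r := L))
  let e : CubeSpace k ≃L[ℝ] CubeSpace k := .smulLeft (Units.mk0 (2 : ℝ) two_ne_zero)
  obtain ⟨C₂, hC₂, hle₂⟩ := exists_dirichletEnergy_comp_equiv_le
    (F := EuclideanSpace ℝ (Fin ν)) (zero_le_one.trans hp) e
  refine ⟨C₁ * (C₂ + 1), by finiteness, fun f => ?_⟩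
  obtain ⟨g, hg, hclass, hderiv⟩ := exists_smooth_of_eq_base hP hδ hL (f.scale 2 one_le_two)
    fun x hx => f.eq_base (by rw [norm_smul, Real.norm_two]; linarith)
  refine ⟨g, hg, hclass.trans (f.homotopyClass_scale _), fun hf => ?_⟩
  have hscale : ContDiff ℝ 1 (f.scale 2 one_le_two) := hf.comp (contDiff_const_smul 2)
  calc dirichletEnergy p g
      ≤ C₁ * (dirichletEnergy p (f.scale 2 one_le_two) + 1) := hle₁ _ g (hderiv hscale)
    _ ≤ C₁ * (C₂ * dirichletEnergy p f + 1) := by gcongr; exact hle₂ f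
    _ ≤ C₁ * (C₂ + 1) * (dirichletEnergy p f + 1) := by
        rw [mul_assoc]
        gcongr
        exact mul_add_le_add_mul_add_one C₂ 1 _

end SmoothLoops

/-! ### Morrey's inequality -/

theorem ofReal_norm_rpow {F : Type*} [SeminormedAddCommGroup F] (a : F) {p : ℝ} (hp : 0 ≤ p) :
    ENNReal.ofReal (‖a‖ ^ p) = ‖a‖ₑ ^ p := by
  rw [← ofReal_norm, ENNReal.ofReal_rpow_of_nonneg (norm_nonneg _) hp]

theorem lintegral_le_lintegral_rpow_mul_measure_univ {α : Type*} [MeasurableSpace α]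
    {μ : Measure α} {g : α → ℝ≥0∞} (hg : Measurable g) {p : ℝ} (hp : 1 ≤ p) :
    ∫⁻ x, g x ∂μ ≤ (∫⁻ x, g x ^ p ∂μ) ^ (1 / p) * μ univ ^ (1 - 1 / p) := by
  simpa [eLpNorm'_eq_lintegral_enorm] using
    eLpNorm'_le_eLpNorm'_mul_rpow_measure_univ one_pos hp hg.aestronglyMeasurable (μ := μ)

section Morrey

variable {E F : Type*} [NormedAddCommGroup E] [NormedSpace ℝ E] [NormedAddCommGroup F]
  [NormedSpace ℝ F] {f : E → F} {p : ℝ}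

theorem enorm_sub_le_lintegral_enorm_fderiv (hf : ContDiff ℝ 1 f) (x h : E) :
    ‖f (x + h) - f x‖ₑ ≤ ∫⁻ t in Icc (0 : ℝ) 1, ‖h‖ₑ * ‖fderiv ℝ f (x + t • h)‖ₑ := by
  have hline (t : ℝ) : HasDerivAt (fun t : ℝ => f (x + t • h)) (fderiv ℝ f (x + t • h) h) t :=
    (hf.differentiable one_ne_zero _).hasFDerivAt.comp_hasDerivAt t <| by
      simpa using ((hasDerivAt_id t).smul_const h).const_add x
  have hcont : ContDiff ℝ 1 fun t : ℝ => f (x + t • h) := hf.comp (by fun_prop)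
  have hle := enorm_sub_le_lintegral_deriv_of_contDiffOn_Icc hcont.contDiffOn zero_le_one
  simp only [one_smul, zero_smul, add_zero] at hle
  refine hle.trans (lintegral_mono fun t => ?_)
  rw [(hline t).deriv, mul_comm]
  exact ContinuousLinearMap.le_opENorm _ _

variable [MeasureSpace E] [BorelSpace E] [FiniteDimensional ℝ E]
  [(volume : Measure E).IsAddHaarMeasure]

theorem lintegral_comp_smul_eq {r : ℝ} (hr : r ≠ 0) (g : E → ℝ≥0∞) :
    ∫⁻ x, g (r • x) = ENNReal.ofReal |(r ^ Module.finrank ℝ E)⁻¹| * ∫⁻ x, g x := by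
  rw [← smul_eq_mul, ← lintegral_smul_measure, ← Measure.map_addHaar_smul volume hr]
  exact (lintegral_map_equiv g (Homeomorph.smulOfNeZero r hr).toMeasurableEquiv).symm

theorem lintegral_comp_add_smul_eq {r : ℝ} (hr : 0 < r) (x : E) (g : E → ℝ≥0∞) :
    ∫⁻ h, g (x + r • h) = ENNReal.ofReal (r ^ (-(Module.finrank ℝ E : ℝ))) * ∫⁻ x, g x := by
  rw [lintegral_comp_smul_eq hr.ne' fun h => g (x + h), lintegral_add_left_eq_self g x,
    abs_of_pos (by positivity), Real.rpow_neg hr.le, Real.rpow_natCast]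

theorem setLIntegral_ball_enorm_fderiv_add_smul_le (hf : ContDiff ℝ 1 f) (hp : 1 ≤ p) (x : E)
    (r : ℝ) {t : ℝ} (ht : 0 < t) : ∫⁻ h in ball (0 : E) r, ‖fderiv ℝ f (x + t • h)‖ₑ ≤
      dirichletEnergy p f ^ (1 / p) * volume (ball (0 : E) r) ^ (1 - 1 / p) *
        ENNReal.ofReal (t ^ (-(Module.finrank ℝ E : ℝ) / p)) := by
  have hmeas : Measurable fun h : E => ‖fderiv ℝ f (x + t • h)‖ₑ :=
    ((hf.continuous_fderiv one_ne_zero).comp (by fun_prop)).enorm.measurable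
  calc ∫⁻ h in ball (0 : E) r, ‖fderiv ℝ f (x + t • h)‖ₑ
      ≤ (∫⁻ h in ball (0 : E) r, ‖fderiv ℝ f (x + t • h)‖ₑ ^ p) ^ (1 / p) *
          volume (ball (0 : E) r) ^ (1 - 1 / p) := by
        simpa only [Measure.restrict_apply_univ] using
          lintegral_le_lintegral_rpow_mul_measure_univ (μ := volume.restrict (ball 0 r)) hmeas hp
    _ ≤ (∫⁻ h, ‖fderiv ℝ f (x + t • h)‖ₑ ^ p) ^ (1 / p) *
          volume (ball (0 : E) r) ^ (1 - 1 / p) := by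
        gcongr; exact Measure.restrict_le_self
    _ = _ := by
        rw [lintegral_comp_add_smul_eq ht x fun y => ‖fderiv ℝ f y‖ₑ ^ p,
          ENNReal.mul_rpow_of_nonneg _ _ (by positivity),
          ENNReal.ofReal_rpow_of_nonneg (by positivity) (by positivity), ← Real.rpow_mul ht.le,
          mul_one_div, mul_comm (ENNReal.ofReal _), mul_right_comm, ← dirichletEnergy]

theorem setLIntegral_ball_enorm_sub_le (hf : ContDiff ℝ 1 f) (hp : 1 ≤ p) (x : E) (r : ℝ) :
    ∫⁻ z in ball x r, ‖f z - f x‖ₑ ≤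
      ENNReal.ofReal r * (dirichletEnergy p f ^ (1 / p) * volume (ball (0 : E) r) ^ (1 - 1 / p) *
        ∫⁻ t in Ioc (0 : ℝ) 1, ENNReal.ofReal (t ^ (-(Module.finrank ℝ E : ℝ) / p))) := by
  have hcont := hf.continuous_fderiv one_ne_zero
  have : ProperSpace E := FiniteDimensional.proper_real E
  calc ∫⁻ z in ball x r, ‖f z - f x‖ₑ
      = ∫⁻ h in ball (0 : E) r, ‖f (x + h) - f x‖ₑ := by
        rw [← lintegral_indicator measurableSet_ball, ← lintegral_indicator measurableSet_ball,
          ← lintegral_add_left_eq_self _ x]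
        refine lintegral_congr fun h => ?_
        simp only [indicator, mem_ball, dist_eq_norm, add_sub_cancel_left, sub_zero]
    _ ≤ ∫⁻ h in ball (0 : E) r, ENNReal.ofReal r *
          ∫⁻ t in Ioc (0 : ℝ) 1, ‖fderiv ℝ f (x + t • h)‖ₑ := by
        refine setLIntegral_mono' measurableSet_ball fun h hh => ?_
        refine (enorm_sub_le_lintegral_enorm_fderiv hf x h).trans ?_
        rw [lintegral_const_mul' _ _ enorm_ne_top, restrict_Ioc_eq_restrict_Icc, ← ofReal_norm]
        gcongr
        exact (mem_ball_zero_iff.1 hh).le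
    _ = ENNReal.ofReal r * ∫⁻ t in Ioc (0 : ℝ) 1,
          ∫⁻ h in ball (0 : E) r, ‖fderiv ℝ f (x + t • h)‖ₑ := by
        rw [lintegral_const_mul' _ _ ENNReal.ofReal_ne_top, lintegral_lintegral_swap]
        exact (hcont.comp
          (by fun_prop : Continuous fun q : E × ℝ => x + q.2 • q.1)).enorm.aemeasurable
    _ ≤ _ := by
        refine mul_le_mul_right ?_ _
        rw [← lintegral_const_mul _ (by fun_prop)]
        exact setLIntegral_mono' measurableSet_Ioc fun t ht =>
          setLIntegral_ball_enorm_fderiv_add_smul_le hf hp x r ht.1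

theorem edist_mul_measure_ball_le (hf : ContDiff ℝ 1 f) (hp : 1 ≤ p) (x y : E) :
    edist (f x) (f y) * volume (ball (0 : E) (dist x y)) ≤
      2 * (ENNReal.ofReal (2 * dist x y) * (dirichletEnergy p f ^ (1 / p) *
        volume (ball (0 : E) (2 * dist x y)) ^ (1 - 1 / p) *
        ∫⁻ t in Ioc (0 : ℝ) 1, ENNReal.ofReal (t ^ (-(Module.finrank ℝ E : ℝ) / p)))) := by
  calc edist (f x) (f y) * volume (ball (0 : E) (dist x y))
      = ∫⁻ _ in ball x (dist x y), edist (f x) (f y) := by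
        rw [setLIntegral_const, Measure.addHaar_ball_center volume x]
    _ ≤ ∫⁻ z in ball x (dist x y), (‖f z - f x‖ₑ + ‖f z - f y‖ₑ) := lintegral_mono fun z => by
        simpa only [edist_eq_enorm_sub] using edist_triangle_left (f x) (f y) (f z)
    _ = (∫⁻ z in ball x (dist x y), ‖f z - f x‖ₑ) + ∫⁻ z in ball x (dist x y), ‖f z - f y‖ₑ :=
        lintegral_add_left (hf.continuous.sub continuous_const).enorm.measurable _
    _ ≤ (∫⁻ z in ball x (2 * dist x y), ‖f z - f x‖ₑ) +
          ∫⁻ z in ball y (2 * dist x y), ‖f z - f y‖ₑ := by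
        gcongr
        · linarith [dist_nonneg (x := x) (y := y)]
        · exact ball_subset_ball' (by linarith)
    _ ≤ _ := by
        rw [two_mul (ENNReal.ofReal _ * _)]
        exact add_le_add (setLIntegral_ball_enorm_sub_le hf hp x _)
          (setLIntegral_ball_enorm_sub_le hf hp y _)

theorem lintegral_Ioc_rpow_ne_top {a : ℝ} (ha : -1 < a) :
    ∫⁻ t in Ioc (0 : ℝ) 1, ENNReal.ofReal (t ^ a) ≠ ⊤ :=
  (IntegrableOn.setLIntegral_lt_top
    (intervalIntegral.intervalIntegrable_rpow' (a := 0) (b := 1) ha).1).ne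

theorem mul_natPow_rpow_one_sub_inv {R : ℝ≥0∞} (hR₀ : R ≠ 0) (hR : R ≠ ⊤) (n : ℕ) (p : ℝ) :
    R * (R ^ n) ^ (1 - 1 / p) = R ^ n * R ^ (1 - n / p) := by
  nth_rw 1 [← ENNReal.rpow_one R]
  rw [← ENNReal.rpow_natCast, ← ENNReal.rpow_mul, ← ENNReal.rpow_add _ _ hR₀ hR,
    ← ENNReal.rpow_add _ _ hR₀ hR]
  congr 1
  ring

theorem exists_edist_le_dirichletEnergy_mul_edist (hp : 1 ≤ p) (hdim : Module.finrank ℝ E < p) :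
    ∃ C : ℝ≥0∞, C ≠ ⊤ ∧ ∀ f : E → F, ContDiff ℝ 1 f → ∀ x y, edist (f x) (f y) ≤
      C * dirichletEnergy p f ^ (1 / p) * edist x y ^ (1 - Module.finrank ℝ E / p) := by
  have hp₀ : 0 < p := one_pos.trans_le hp
  set n := Module.finrank ℝ E
  let c := ∫⁻ t in Ioc (0 : ℝ) 1, ENNReal.ofReal (t ^ (-(n : ℝ) / p))
  have hc : c ≠ ⊤ := lintegral_Ioc_rpow_ne_top <| by
    rwa [neg_div, neg_lt_neg_iff, div_lt_one hp₀]
  let ω := volume (ball (0 : E) 1)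
  have hω₀ : ω ≠ 0 := (measure_ball_pos _ _ one_pos).ne'
  have hω : ω ≠ ⊤ := measure_ball_lt_top.ne
  have hs : 0 ≤ 1 - 1 / p := sub_nonneg.2 ((div_le_one hp₀).2 hp)
  refine ⟨4 * (2 ^ n * ω) ^ (1 - 1 / p) * c * ω⁻¹, by finiteness, fun f hf x y => ?_⟩
  rcases eq_or_ne x y with rfl | hxy
  · simp only [edist_self, zero_le]
  set R := edist x y
  have hR₀ : R ≠ 0 := mt edist_eq_zero.1 hxy
  have hR : R ≠ ⊤ := edist_ne_top x y
  have key := edist_mul_measure_ball_le hf hp x y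
  rw [Measure.addHaar_ball_of_pos _ _ (dist_pos.2 hxy), Measure.addHaar_ball_of_pos _ _
    (mul_pos two_pos (dist_pos.2 hxy)), mul_pow,
    ENNReal.ofReal_mul (by positivity), ENNReal.ofReal_mul (by positivity),
    ENNReal.ofReal_pow dist_nonneg, ← edist_dist, ENNReal.ofReal_pow two_pos.le,
    ENNReal.ofReal_ofNat] at key
  rw [← ENNReal.mul_le_mul_iff_left (c := R ^ n * ω) (by positivity) (by finiteness)]
  refine key.trans_eq ?_
  rw [mul_right_comm (2 ^ n), ENNReal.mul_rpow_of_nonneg _ _ hs]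
  calc 2 * (2 * R * (dirichletEnergy p f ^ (1 / p) *
        ((2 ^ n * ω) ^ (1 - 1 / p) * (R ^ n) ^ (1 - 1 / p)) * c))
      = 4 * (2 ^ n * ω) ^ (1 - 1 / p) * c * dirichletEnergy p f ^ (1 / p) *
          (R * (R ^ n) ^ (1 - 1 / p)) := by ring
    _ = 4 * (2 ^ n * ω) ^ (1 - 1 / p) * c * dirichletEnergy p f ^ (1 / p) *
          (R ^ n * R ^ (1 - n / p)) * (ω⁻¹ * ω) := by
        rw [mul_natPow_rpow_one_sub_inv hR₀ hR, ENNReal.inv_mul_cancel hω₀ hω, mul_one]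
    _ = _ := by ring

end Morrey

/-! ### The Gagliardo energy -/

section Kernel

variable {E : Type*} [NormedAddCommGroup E] [NormedSpace ℝ E] [FiniteDimensional ℝ E]
  [MeasureSpace E] [BorelSpace E] [(volume : Measure E).IsAddHaarMeasure]

theorem setLIntegral_preimage_inv_smul_enorm_rpow {S : Set E} (hS : MeasurableSet S) (a : ℝ)
    {δ : ℝ} (hδ : 0 < δ) : ∫⁻ h in (δ⁻¹ • ·) ⁻¹' S, ‖h‖ₑ ^ a =
      ENNReal.ofReal δ ^ (a + Module.finrank ℝ E) * ∫⁻ h in S, ‖h‖ₑ ^ a := by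
  have hmeas : MeasurableSet ((δ⁻¹ • ·) ⁻¹' S : Set E) := measurable_const_smul δ⁻¹ hS
  have hδ₀ : ENNReal.ofReal δ ≠ 0 := (ENNReal.ofReal_pos.2 hδ).ne'
  have hscale (h : E) : ((δ⁻¹ • ·) ⁻¹' S).indicator (‖·‖ₑ ^ a) h =
      ENNReal.ofReal δ ^ a * S.indicator (‖·‖ₑ ^ a) (δ⁻¹ • h) := by
    by_cases hh : δ⁻¹ • h ∈ S
    · rw [indicator_of_mem hh, indicator_of_mem (by exact hh),
        ← ENNReal.mul_rpow_of_ne_top ENNReal.ofReal_ne_top enorm_ne_top,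
        ← Real.enorm_of_nonneg hδ.le, ← enorm_smul, smul_inv_smul₀ hδ.ne']
    · rw [indicator_of_notMem hh, indicator_of_notMem (by exact hh), mul_zero]
  rw [← lintegral_indicator hmeas, ← lintegral_indicator hS]
  simp_rw [hscale]
  rw [lintegral_const_mul' _ _ (by finiteness), lintegral_comp_smul_eq (inv_ne_zero hδ.ne'),
    ← mul_assoc, inv_pow, inv_inv, abs_of_pos (by positivity), ENNReal.ofReal_pow hδ.le,
    ENNReal.rpow_add _ _ hδ₀ ENNReal.ofReal_ne_top, ENNReal.rpow_natCast]

theorem setLIntegral_ball_enorm_rpow_ne_top [Nontrivial E] {a : ℝ}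
    (ha : -(Module.finrank ℝ E : ℝ) < a) : ∫⁻ h in ball (0 : E) 1, ‖h‖ₑ ^ a ≠ ⊤ := by
  have hint : IntegrableOn (fun h : E => ‖h‖ ^ a) (ball 0 1) :=
    ((locallyIntegrable_of_norm_le_rpow (C := 1) (α := -a) Module.finrank_pos (by linarith)
      (.of_forall fun h => by simp [abs_of_nonneg (Real.rpow_nonneg (norm_nonneg h) a)])
      (measurable_norm.pow_const a).aestronglyMeasurable).integrableOn_isCompact
        (isCompact_closedBall 0 1)).mono_set ball_subset_closedBall
  have hae : ∀ᵐ h : E, ‖h‖ₑ ^ a = ENNReal.ofReal (‖h‖ ^ a) := by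
    filter_upwards [compl_mem_ae_iff.2 (measure_singleton (0 : E))] with h hh
    rw [← ofReal_norm, ENNReal.ofReal_rpow_of_pos (norm_pos_iff.2 hh)]
  rw [lintegral_congr_ae (ae_restrict_of_ae hae)]
  exact hint.setLIntegral_lt_top.ne

theorem setLIntegral_compl_ball_enorm_rpow_ne_top {a : ℝ} (ha : a < -(Module.finrank ℝ E : ℝ)) :
    ∫⁻ h in (ball (0 : E) 1)ᶜ, ‖h‖ₑ ^ a ≠ ⊤ := by
  have ha₀ : a ≤ 0 := ha.le.trans (neg_nonpos.2 (Nat.cast_nonneg _))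
  have hjapanese := finite_integral_one_add_norm (μ := (volume : Measure E)) (lt_neg_of_lt_neg ha)
  rw [neg_neg] at hjapanese
  have hle : ∫⁻ h in (ball (0 : E) 1)ᶜ, ‖h‖ₑ ^ a ≤
      ∫⁻ h : E, ENNReal.ofReal (2⁻¹ ^ a) * ENNReal.ofReal ((1 + ‖h‖) ^ a) := by
    refine (setLIntegral_mono' measurableSet_ball.compl fun h hh => ?_).trans
      (setLIntegral_le_lintegral _ _)
    have hh₁ : 1 ≤ ‖h‖ := by simpa using hh
    rw [← ofReal_norm, ENNReal.ofReal_rpow_of_pos (by positivity),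
      ← ENNReal.ofReal_mul (by positivity), ← Real.mul_rpow (by positivity) (by positivity)]
    exact ENNReal.ofReal_le_ofReal
      (Real.rpow_le_rpow_of_nonpos (by positivity) (by linarith) ha₀)
  rw [lintegral_const_mul' _ _ ENNReal.ofReal_ne_top] at hle
  exact (hle.trans_lt (ENNReal.mul_lt_top ENNReal.ofReal_lt_top hjapanese)).ne

end Kernel

theorem lintegral_enorm_sub_rpow_le {E F : Type*} [NormedAddCommGroup E] [NormedSpace ℝ E]
    [MeasureSpace E] [BorelSpace E] [SecondCountableTopology E]
    [SFinite (volume : Measure E)] [(volume : Measure E).IsAddRightInvariant]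
    [NormedAddCommGroup F] [NormedSpace ℝ F] {f : E → F} (hf : ContDiff ℝ 1 f) {p : ℝ}
    (hp : 1 ≤ p) (h : E) :
    ∫⁻ x, ‖f (x + h) - f x‖ₑ ^ p ≤ ‖h‖ₑ ^ p * dirichletEnergy p f := by
  have hcont := hf.continuous_fderiv one_ne_zero
  have hp₀ : 0 < p := one_pos.trans_le hp
  have hpoint (x : E) : ‖f (x + h) - f x‖ₑ ^ p ≤
      ‖h‖ₑ ^ p * ∫⁻ t in Icc (0 : ℝ) 1, ‖fderiv ℝ f (x + t • h)‖ₑ ^ p := by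
    have hmeas : Measurable fun t : ℝ => ‖fderiv ℝ f (x + t • h)‖ₑ :=
      (hcont.comp (by fun_prop)).enorm.measurable
    have hholder := lintegral_le_lintegral_rpow_mul_measure_univ
      (μ := volume.restrict (Icc (0 : ℝ) 1)) hmeas hp
    have hle := enorm_sub_le_lintegral_enorm_fderiv hf x h
    rw [lintegral_const_mul' _ _ enorm_ne_top] at hle
    rw [Measure.restrict_apply_univ, Real.volume_Icc, sub_zero, ENNReal.ofReal_one,
      ENNReal.one_rpow, mul_one] at hholder
    calc ‖f (x + h) - f x‖ₑ ^ p
        ≤ (‖h‖ₑ * (∫⁻ t in Icc (0 : ℝ) 1, ‖fderiv ℝ f (x + t • h)‖ₑ ^ p) ^ (1 / p)) ^ p := by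
          gcongr; exact hle.trans (by gcongr)
      _ = _ := by
          rw [ENNReal.mul_rpow_of_nonneg _ _ hp₀.le, ← ENNReal.rpow_mul,
            one_div_mul_cancel hp₀.ne', ENNReal.rpow_one]
  calc ∫⁻ x, ‖f (x + h) - f x‖ₑ ^ p
      ≤ ∫⁻ x, ‖h‖ₑ ^ p * ∫⁻ t in Icc (0 : ℝ) 1, ‖fderiv ℝ f (x + t • h)‖ₑ ^ p :=
        lintegral_mono hpoint
    _ = ‖h‖ₑ ^ p * ∫⁻ t in Icc (0 : ℝ) 1, ∫⁻ x, ‖fderiv ℝ f (x + t • h)‖ₑ ^ p := by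
        rw [lintegral_const_mul' _ _ (by finiteness), lintegral_lintegral_swap]
        have hline : Continuous fun q : E × ℝ => q.1 + q.2 • h := by fun_prop
        exact ((hcont.comp hline).enorm.measurable.pow_const p).aemeasurable
    _ = ‖h‖ₑ ^ p * dirichletEnergy p f := by
        simp_rw [lintegral_add_right_eq_self fun x => ‖fderiv ℝ f x‖ₑ ^ p]
        rw [setLIntegral_const, Real.volume_Icc, sub_zero, ENNReal.ofReal_one, mul_one,
          dirichletEnergy]

section Gagliardo

variable {n ν : ℕ} {s p : ℝ} {A B : Set (EuclideanSpace ℝ (Fin n))}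
  {u v : EuclideanSpace ℝ (Fin n) → EuclideanSpace ℝ (Fin ν)}

theorem gagliardoE_mono_set (h : A ⊆ B) : gagliardoE s p A u ≤ gagliardoE s p B u :=
  (lintegral_mono fun _ => lintegral_mono_set h).trans (lintegral_mono_set h)

theorem gagliardoE_congr (hA : MeasurableSet A) (h : EqOn u v A) :
    gagliardoE s p A u = gagliardoE s p A v :=
  setLIntegral_congr_fun hA fun x hx => setLIntegral_congr_fun hA fun y hy => by
    rw [h hx, h hy]

theorem gagliardoE_pos (hp : 0 ≤ p) (hu : Continuous u) (hA : IsOpen A)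
    {x y : EuclideanSpace ℝ (Fin n)} (hx : x ∈ A) (hy : y ∈ A) (hne : u x ≠ u y) :
    0 < gagliardoE s p A u := by
  have hxy : 0 < ‖y - x‖ := norm_pos_iff.2 (sub_ne_zero.2 fun h => hne (by rw [h]))
  have hdist : ‖y - x‖ ^ ((n : ℝ) + s * p) ≠ 0 := (Real.rpow_pos_of_pos hxy _).ne'
  let Φ : EuclideanSpace ℝ (Fin n) × EuclideanSpace ℝ (Fin n) → ℝ :=
    fun q => ‖u q.2 - u q.1‖ ^ p / ‖q.2 - q.1‖ ^ ((n : ℝ) + s * p)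
  have hΦ : 0 < Φ (x, y) :=
    div_pos (Real.rpow_pos_of_pos (norm_pos_iff.2 (sub_ne_zero.2 hne.symm)) _)
      (Real.rpow_pos_of_pos hxy _)
  have hcont : ContinuousAt Φ (x, y) := by
    have hnum : ContinuousAt (fun q : EuclideanSpace ℝ (Fin n) × EuclideanSpace ℝ (Fin n) =>
        ‖u q.2 - u q.1‖) (x, y) := by fun_prop
    have hden : ContinuousAt (fun q : EuclideanSpace ℝ (Fin n) × EuclideanSpace ℝ (Fin n) =>
        ‖q.2 - q.1‖) (x, y) := by fun_prop
    exact (hnum.rpow_const (Or.inr hp)).div (hden.rpow_const (Or.inl hxy.ne')) hdist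
  obtain ⟨c, hc, hcΦ⟩ := exists_between hΦ
  obtain ⟨S, T, hS, hxS, hT, hyT, hST⟩ := mem_nhds_prod_iff'.1
    ((hcont.eventually (lt_mem_nhds hcΦ)).and (prod_mem_nhds (hA.mem_nhds hx) (hA.mem_nhds hy)))
  calc 0 < ENNReal.ofReal c * volume T * volume S := by
        have := (hT.measure_pos volume ⟨y, hyT⟩).ne'
        have := (hS.measure_pos volume ⟨x, hxS⟩).ne'
        positivity
    _ = ∫⁻ _ in S, ∫⁻ _ in T, ENNReal.ofReal c := by simp only [setLIntegral_const]
    _ ≤ ∫⁻ a in S, ∫⁻ a' in T, ENNReal.ofReal (Φ (a, a')) :=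
        setLIntegral_mono' hS.measurableSet fun a ha =>
          setLIntegral_mono' hT.measurableSet fun a' ha' =>
            ENNReal.ofReal_le_ofReal (hST ⟨ha, ha'⟩).1.le
    _ ≤ gagliardoE s p A u :=
        (lintegral_mono fun a => lintegral_mono_set fun a' ha' =>
          (hST (mk_mem_prod hxS ha')).2.2).trans
            (lintegral_mono_set fun a ha => (hST (mk_mem_prod ha hyT)).2.1)

theorem ofReal_norm_rpow_div_norm_rpow_le {V W : Type*} [NormedAddCommGroup V]
    [NormedAddCommGroup W] (hp : 0 ≤ p) {q : ℝ} (hq : 0 < q) (a : V) (h : W) :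
    ENNReal.ofReal (‖a‖ ^ p / ‖h‖ ^ q) ≤ ‖h‖ₑ ^ (-q) * ‖a‖ₑ ^ p := by
  rcases eq_or_ne h 0 with rfl | hh
  · simp only [norm_zero, Real.zero_rpow hq.ne', div_zero, ENNReal.ofReal_zero, zero_le]
  · rw [ENNReal.ofReal_div_of_pos (by positivity), ofReal_norm_rpow _ hp,
      ofReal_norm_rpow _ hq.le, ENNReal.rpow_neg, ENNReal.div_eq_inv_mul]

theorem gagliardoE_le_lintegral_translate (hp : 0 < p) (hs : 0 < s) (hu : Continuous u) :
    gagliardoE s p A u ≤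
      ∫⁻ h, ‖h‖ₑ ^ (-((n : ℝ) + s * p)) * ∫⁻ x in A, ‖u (x + h) - u x‖ₑ ^ p := by
  calc gagliardoE s p A u
      ≤ ∫⁻ x in A, ∫⁻ h, ‖h‖ₑ ^ (-((n : ℝ) + s * p)) * ‖u (x + h) - u x‖ₑ ^ p := by
        refine lintegral_mono fun x => (setLIntegral_le_lintegral _ _).trans ?_
        rw [← lintegral_add_left_eq_self _ x]
        refine lintegral_mono fun h => ?_
        rw [add_sub_cancel_left]
        exact ofReal_norm_rpow_div_norm_rpow_le hp.le (by positivity) _ _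
    _ = ∫⁻ h, ∫⁻ x in A, ‖h‖ₑ ^ (-((n : ℝ) + s * p)) * ‖u (x + h) - u x‖ₑ ^ p := by
        refine lintegral_lintegral_swap (Measurable.aemeasurable ?_)
        exact Measurable.mul (by fun_prop) (Measurable.pow_const
          (Continuous.measurable (by fun_prop)) p)
    _ = _ := by
        refine lintegral_congr fun h => ?_
        rw [lintegral_const_mul]
        exact Measurable.pow_const (Continuous.measurable (by fun_prop)) p

theorem enorm_rpow_mul_setLIntegral_enorm_sub_rpow_le (hp : 1 ≤ p) (hu : ContDiff ℝ 1 u)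
    (h : EuclideanSpace ℝ (Fin n)) :
    ‖h‖ₑ ^ (-((n : ℝ) + s * p)) * ∫⁻ x in A, ‖u (x + h) - u x‖ₑ ^ p ≤
      ‖h‖ₑ ^ ((1 - s) * p - n) * dirichletEnergy p u := by
  rcases eq_or_ne h 0 with rfl | hh
  · simp only [add_zero, sub_self, enorm_zero, ENNReal.zero_rpow_of_pos (one_pos.trans_le hp),
      lintegral_zero, mul_zero, zero_le]
  · calc _ ≤ ‖h‖ₑ ^ (-((n : ℝ) + s * p)) * (‖h‖ₑ ^ p * dirichletEnergy p u) := by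
          gcongr
          exact (setLIntegral_le_lintegral _ _).trans (lintegral_enorm_sub_rpow_le hu hp h)
      _ = _ := by
          rw [← mul_assoc, ← ENNReal.rpow_add _ _ (enorm_ne_zero.2 hh) enorm_ne_top]
          congr 2
          ring

theorem gagliardoE_le_near_add_far (hp : 1 ≤ p) (hs : 0 < s) (hu : ContDiff ℝ 1 u) {D : ℝ≥0∞}
    (hD : ∀ x y, edist (u x) (u y) ≤ D) {δ : ℝ} (hδ : 0 < δ) :
    gagliardoE s p A u ≤
      ENNReal.ofReal δ ^ ((1 - s) * p) *
        (∫⁻ h in ball (0 : EuclideanSpace ℝ (Fin n)) 1, ‖h‖ₑ ^ ((1 - s) * p - n)) *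
          dirichletEnergy p u +
      ENNReal.ofReal δ ^ (-(s * p)) *
        (∫⁻ h in (ball (0 : EuclideanSpace ℝ (Fin n)) 1)ᶜ, ‖h‖ₑ ^ (-((n : ℝ) + s * p))) *
          (D ^ p * volume A) := by
  have hp₀ : 0 < p := one_pos.trans_le hp
  let S : Set (EuclideanSpace ℝ (Fin n)) := (δ⁻¹ • ·) ⁻¹' ball 0 1
  have hS : MeasurableSet S := measurable_const_smul δ⁻¹ measurableSet_ball
  have hfar (h : EuclideanSpace ℝ (Fin n)) : ∫⁻ x in A, ‖u (x + h) - u x‖ₑ ^ p ≤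
      D ^ p * volume A := by
    rw [← setLIntegral_const]
    refine lintegral_mono fun x => ?_
    rw [← edist_eq_enorm_sub]
    gcongr
    exact hD _ _
  have hscale₁ := setLIntegral_preimage_inv_smul_enorm_rpow
    (measurableSet_ball (x := (0 : EuclideanSpace ℝ (Fin n))) (ε := 1)) ((1 - s) * p - n) hδ
  have hscale₂ := setLIntegral_preimage_inv_smul_enorm_rpow
    (measurableSet_ball (x := (0 : EuclideanSpace ℝ (Fin n))) (ε := 1)).compl
    (-((n : ℝ) + s * p)) hδ
  rw [finrank_euclideanSpace_fin, sub_add_cancel] at hscale₁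
  rw [finrank_euclideanSpace_fin, neg_add, neg_add_cancel_comm] at hscale₂
  refine (gagliardoE_le_lintegral_translate hp₀ hs hu.continuous).trans ?_
  rw [← lintegral_add_compl _ hS]
  refine add_le_add
    ((lintegral_mono (enorm_rpow_mul_setLIntegral_enorm_sub_rpow_le hp hu)).trans_eq ?_)
    ((lintegral_mono fun h => mul_le_mul_right (hfar h) _).trans_eq ?_)
  · rw [lintegral_mul_const _ (by fun_prop), hscale₁]
  · rw [lintegral_mul_const _ (by fun_prop), ← preimage_compl, neg_add, hscale₂]

theorem exists_gagliardoE_le_rpow_dirichletEnergy [NeZero n] (hp : 1 ≤ p) (hs : s ∈ Ioo (0 : ℝ) 1)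
    (hA : volume A ≠ ⊤) {D : ℝ≥0∞} (hD : D ≠ ⊤) : ∃ C : ℝ≥0∞, C ≠ ⊤ ∧
      ∀ u : EuclideanSpace ℝ (Fin n) → EuclideanSpace ℝ (Fin ν), ContDiff ℝ 1 u →
        (∀ x y, edist (u x) (u y) ≤ D) → dirichletEnergy p u ≠ ⊤ →
        gagliardoE s p A u ≤ C * (1 + dirichletEnergy p u) ^ s := by
  have hp₀ : 0 < p := one_pos.trans_le hp
  let c₁ := ∫⁻ h in ball (0 : EuclideanSpace ℝ (Fin n)) 1, ‖h‖ₑ ^ ((1 - s) * p - n)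
  let c₂ := ∫⁻ h in (ball (0 : EuclideanSpace ℝ (Fin n)) 1)ᶜ, ‖h‖ₑ ^ (-((n : ℝ) + s * p))
  have hc₁ : c₁ ≠ ⊤ := setLIntegral_ball_enorm_rpow_ne_top <| by
    rw [finrank_euclideanSpace_fin]
    linarith [mul_pos (sub_pos.2 hs.2) hp₀]
  have hc₂ : c₂ ≠ ⊤ := setLIntegral_compl_ball_enorm_rpow_ne_top <| by
    rw [finrank_euclideanSpace_fin]
    linarith [mul_pos hs.1 hp₀]
  refine ⟨c₁ + c₂ * (D ^ p * volume A), by finiteness, fun u hu hdiam hK => ?_⟩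
  set K := dirichletEnergy p u
  have hK₀ : 1 + K ≠ 0 := by positivity
  have hK₁ : 1 + K ≠ ⊤ := by finiteness
  let δ := ((1 + K) ^ (-p⁻¹)).toReal
  have hδ : ENNReal.ofReal δ = (1 + K) ^ (-p⁻¹) :=
    ENNReal.ofReal_toReal (ENNReal.rpow_ne_top_of_ne_zero hK₀ hK₁)
  have hδ₀ : 0 < δ := ENNReal.toReal_pos (by simp [hK₁]) (ENNReal.rpow_ne_top_of_ne_zero hK₀ hK₁)
  refine (gagliardoE_le_near_add_far hp hs.1 hu hdiam hδ₀).trans ?_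
  rw [hδ, ← ENNReal.rpow_mul, ← ENNReal.rpow_mul, add_mul]
  refine add_le_add ?_ (le_of_eq ?_)
  · have hsplit : -p⁻¹ * ((1 - s) * p) = s - 1 := by field_simp; ring
    calc (1 + K) ^ (-p⁻¹ * ((1 - s) * p)) * c₁ * K
        = c₁ * ((1 + K) ^ (s - 1) * K) := by rw [hsplit]; ring
      _ ≤ c₁ * ((1 + K) ^ (s - 1) * (1 + K)) := by gcongr; exact le_add_self
      _ = c₁ * (1 + K) ^ s := by
          nth_rw 2 [← ENNReal.rpow_one (1 + K)]
          rw [← ENNReal.rpow_add _ _ hK₀ hK₁, sub_add_cancel]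
  · have hcancel : -p⁻¹ * -(s * p) = s := by field_simp
    rw [hcancel]
    ring

end Gagliardo

/-! ### The energy of a homotopy class -/

theorem exists_finite_code_of_uniformEquicontinuous {ι X Y : Type*} [PseudoMetricSpace X]
    [PseudoMetricSpace Y] {K : Set X} (hK : IsCompact K) {N : Set Y} (hN : IsCompact N)
    {F : ι → X → Y} (hF : UniformEquicontinuous F) (hmaps : ∀ i, MapsTo (F i) K N) {ε : ℝ}
    (hε : 0 < ε) : ∃ (S : Set X) (T : Set Y) (code : ι → S → T), Finite (S → T) ∧
      ∀ i j, code i = code j → ∀ x ∈ K, dist (F i x) (F j x) ≤ ε := by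
  obtain ⟨r, hr, hFr⟩ := Metric.uniformEquicontinuous_iff.1 hF (ε / 4) (by positivity)
  obtain ⟨S, hSK, hS, hcoverK⟩ := hK.finite_cover_balls hr
  obtain ⟨T, -, hT, hcoverN⟩ := hN.finite_cover_balls (e := ε / 4) (by positivity)
  have hnear (i : ι) (s : S) : ∃ t : T, dist (F i s) t < ε / 4 := by
    simpa using hcoverN (hmaps i (hSK s.2))
  choose code hcode using hnear
  have := hS.to_subtype
  have := hT.to_subtype
  refine ⟨S, T, code, inferInstance, fun i j hij x hx => ?_⟩
  obtain ⟨s, hs, hxs⟩ := mem_iUnion₂.1 (hcoverK hx)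
  have hi := hcode i ⟨s, hs⟩
  rw [hij] at hi
  have hj := hcode j ⟨s, hs⟩
  have hxi := hFr x s hxs i
  have hxj := hFr x s hxs j
  rw [dist_comm] at hj hxj
  linarith [dist_triangle4 (F i x) (F i s) (code j ⟨s, hs⟩) (F j s),
    dist_triangle (F i x) (F j s) (F j x)]

theorem uniformEquicontinuous_of_dirichletEnergy_le {ι E F : Type*} [NormedAddCommGroup E]
    [NormedSpace ℝ E] [MeasureSpace E] [BorelSpace E] [FiniteDimensional ℝ E]
    [(volume : Measure E).IsAddHaarMeasure] [NormedAddCommGroup F] [NormedSpace ℝ F] {p : ℝ}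
    (hp : 1 ≤ p) (hdim : Module.finrank ℝ E < p) {f : ι → E → F} (hf : ∀ i, ContDiff ℝ 1 (f i))
    {A : ℝ≥0∞} (hA : A ≠ ⊤) (hle : ∀ i, dirichletEnergy p (f i) ≤ A) :
    UniformEquicontinuous f := by
  have hp₀ : 0 < p := one_pos.trans_le hp
  have hexp : 0 < 1 - Module.finrank ℝ E / p := sub_pos.2 ((div_lt_one hp₀).2 hdim)
  obtain ⟨C, hC, hmorrey⟩ := exists_edist_le_dirichletEnergy_mul_edist (F := F) hp hdim
  let L := C * A ^ (1 / p)
  have hL : L ≠ ⊤ := by finiteness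
  refine Metric.uniformEquicontinuous_of_continuity_modulus
    (fun r => (L * ENNReal.ofReal r ^ (1 - Module.finrank ℝ E / p)).toReal) ?_ f fun x y i => ?_
  · have hcont : Continuous fun r : ℝ => L * ENNReal.ofReal r ^ (1 - Module.finrank ℝ E / p) :=
      (ENNReal.continuous_const_mul hL).comp
        (ENNReal.continuous_rpow_const.comp ENNReal.continuous_ofReal)
    have hzero := hcont.tendsto 0
    rw [ENNReal.ofReal_zero, ENNReal.zero_rpow_of_pos hexp, mul_zero] at hzero
    exact (ENNReal.tendsto_toReal ENNReal.zero_ne_top).comp hzero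
  · rw [← edist_dist, dist_edist]
    refine ENNReal.toReal_mono (by finiteness) ((hmorrey (f i) (hf i) x y).trans ?_)
    gcongr ?_ * _
    exact mul_le_mul_right (ENNReal.rpow_le_rpow (hle i) (by positivity)) C

section ClassEnergy

variable {ν k : ℕ} {N : Set (EuclideanSpace ℝ (Fin ν))} {b : N} {p : ℝ}

/-- The infimum of the `p`-energies of the `C^1` loops on the cube in the homotopy class `α`. -/
def classEnergy (p : ℝ) (α : HomotopyGroup (Fin (k + 1)) N b) : ℝ≥0∞ :=
  ⨅ f : {f : CubeLoop k b // ContDiff ℝ 1 f ∧ f.homotopyClass = α}, dirichletEnergy p f.1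

theorem classEnergy_homotopyClass_le {f : CubeLoop k b} (hf : ContDiff ℝ 1 f) :
    classEnergy p f.homotopyClass ≤ dirichletEnergy p f :=
  iInf_le (fun g : {g : CubeLoop k b // ContDiff ℝ 1 g ∧ g.homotopyClass = f.homotopyClass} =>
    dirichletEnergy p g.1) ⟨f, hf, rfl⟩

theorem exists_dirichletEnergy_lt_of_classEnergy_lt {α : HomotopyGroup (Fin (k + 1)) N b}
    {A : ℝ≥0∞} (h : classEnergy p α < A) :
    ∃ f : CubeLoop k b, ContDiff ℝ 1 f ∧ f.homotopyClass = α ∧ dirichletEnergy p f < A := by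
  obtain ⟨⟨f, hf, hα⟩, hlt⟩ := iInf_lt_iff.1 h
  exact ⟨f, hf, hα, hlt⟩

theorem finite_setOf_classEnergy_le (hN : IsCompact N) (hsub : IsSmoothSubmanifold N)
    (hp : (k : ℝ) + 1 < p) {A : ℝ≥0∞} (hA : A ≠ ⊤) :
    {α : HomotopyGroup (Fin (k + 1)) N b | classEnergy p α ≤ A}.Finite := by
  obtain ⟨δ, hδ, P, hP⟩ := hsub.exists_isSmoothRetraction hN ⟨b, b.2⟩
  have hloop (α : {α : HomotopyGroup (Fin (k + 1)) N b | classEnergy p α ≤ A}) :=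
    exists_dirichletEnergy_lt_of_classEnergy_lt (α.2.trans_lt (ENNReal.lt_add_right hA one_ne_zero))
  choose f hf hclass henergy using hloop
  have hequi : UniformEquicontinuous fun α => ⇑(f α) :=
    uniformEquicontinuous_of_dirichletEnergy_le (p := p) (A := A + 1)
      (by linarith [k.cast_nonneg (α := ℝ)]) (by simpa using hp) hf (by finiteness)
      fun α => (henergy α).le
  obtain ⟨S, T, code, hfin, hcode⟩ := exists_finite_code_of_uniformEquicontinuous
    (isCompact_closedBall (0 : CubeSpace k) 1) hN hequi (fun α x _ => (f α).mem x) hδ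
  rw [← finite_coe_iff]
  refine Finite.of_injective code fun α β hαβ => Subtype.ext ?_
  rw [← hclass α, ← hclass β]
  refine CubeLoop.homotopyClass_eq_of_dist_le hP fun x => ?_
  rcases le_total ‖x‖ 1 with hx | hx
  · exact hcode _ _ hαβ x (mem_closedBall_zero_iff.2 hx)
  · rw [(f α).eq_base hx, (f β).eq_base hx, dist_self]
    exact hδ.le

theorem exists_smooth_dirichletEnergy_le_classEnergy (hN : IsCompact N)
    (hsub : IsSmoothSubmanifold N) (hp : 1 ≤ p) : ∃ C : ℝ≥0∞, C ≠ ⊤ ∧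
      ∀ α : HomotopyGroup (Fin (k + 1)) N b, ∃ f : CubeLoop k b, ContDiff ℝ (⊤ : ℕ∞) f ∧
        f.homotopyClass = α ∧ dirichletEnergy p f ≤ C * (classEnergy p α + 1) := by
  obtain ⟨C, hC, hsmooth⟩ := CubeLoop.exists_smooth_homotopyClass_eq (k := k) (b := b) hN hsub hp
  refine ⟨2 * C, by finiteness, fun α => ?_⟩
  have hfinite : classEnergy p α ≠ ⊤ := by
    obtain ⟨f, rfl⟩ := CubeLoop.homotopyClass_surjective α
    obtain ⟨g, hg, hgf, -⟩ := hsmooth f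
    have hg₁ : ContDiff ℝ 1 g := hg.of_le (mod_cast le_top)
    rw [← hgf]
    exact ne_top_of_le_ne_top (CubeLoop.dirichletEnergy_ne_top (one_pos.trans_le hp) hg₁)
      (classEnergy_homotopyClass_le hg₁)
  obtain ⟨f, hf, rfl, hlt⟩ := exists_dirichletEnergy_lt_of_classEnergy_lt
    (ENNReal.lt_add_right hfinite one_ne_zero)
  obtain ⟨g, hg, hgf, hle⟩ := hsmooth f
  refine ⟨g, hg, hgf, (hle hf).trans ?_⟩
  calc C * (dirichletEnergy p f + 1)
      ≤ C * (classEnergy p f.homotopyClass + 1 + (classEnergy p f.homotopyClass + 1)) := by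
        gcongr; exact le_add_self
    _ = _ := by ring

end ClassEnergy

/-! ### Spreading a loop over a tube -/

theorem lintegral_fun_norm_addHaar {E : Type*} [NormedAddCommGroup E] [NormedSpace ℝ E]
    [FiniteDimensional ℝ E] [Nontrivial E] [MeasurableSpace E] [BorelSpace E] (μ : Measure E)
    [μ.IsAddHaarMeasure] {h : ℝ → ℝ≥0∞} (hh : Measurable h) :
    ∫⁻ x, h ‖x‖ ∂μ = Module.finrank ℝ E * μ (ball 0 1) *
      ∫⁻ r in Ioi (0 : ℝ), ENNReal.ofReal (r ^ (Module.finrank ℝ E - 1)) * h r := by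
  have hpow : Measurable fun r : Ioi (0 : ℝ) => ENNReal.ofReal (r.1 ^ (Module.finrank ℝ E - 1)) :=
    by fun_prop
  have hIoi : Measurable fun r : Ioi (0 : ℝ) => h r := hh.comp measurable_subtype_coe
  have hsnd : Measurable fun q : sphere (0 : E) 1 × Ioi (0 : ℝ) => h q.2 :=
    hIoi.comp measurable_snd
  calc ∫⁻ x, h ‖x‖ ∂μ = ∫⁻ x : ({0}ᶜ : Set E), h ‖x.1‖ ∂(μ.comap (↑)) := by
        rw [lintegral_subtype_comap (measurableSet_singleton _).compl fun x => h ‖x‖,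
          restrict_compl_singleton]
    _ = ∫⁻ q, h q.2 ∂(μ.toSphere.prod (.volumeIoiPow (Module.finrank ℝ E - 1))) :=
        (lintegral_congr fun x => by rw [homeomorphUnitSphereProd_apply_snd_coe]).trans
          (μ.measurePreserving_homeomorphUnitSphereProd.lintegral_comp hsnd)
    _ = μ.toSphere univ * ∫⁻ r, h r ∂(.volumeIoiPow (Module.finrank ℝ E - 1)) := by
        rw [lintegral_prod _ hsnd.aemeasurable]
        simp only [lintegral_const, mul_comm]
    _ = _ := by
        rw [μ.toSphere_apply_univ, Measure.volumeIoiPow,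
          lintegral_withDensity_eq_lintegral_mul _ hpow hIoi]
        congr 1
        exact lintegral_subtype_comap measurableSet_Ioi
          fun r => ENNReal.ofReal (r ^ (Module.finrank ℝ E - 1)) * h r

theorem lintegral_fun_norm_le {E : Type*} [NormedAddCommGroup E] [NormedSpace ℝ E]
    [FiniteDimensional ℝ E] [Nontrivial E] [MeasurableSpace E] [BorelSpace E] (μ : Measure E)
    [μ.IsAddHaarMeasure] {h : ℝ → ℝ≥0∞} (hh : Measurable h) {R : ℝ} (hR : ∀ r, R < r → h r = 0) :
    ∫⁻ x, h ‖x‖ ∂μ ≤ Module.finrank ℝ E * μ (ball 0 1) *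
      (ENNReal.ofReal (R ^ (Module.finrank ℝ E - 1)) * ∫⁻ r, h r) := by
  rw [lintegral_fun_norm_addHaar μ hh, ← lintegral_const_mul' _ _ ENNReal.ofReal_ne_top]
  refine mul_le_mul_right ?_ _
  refine (setLIntegral_mono' measurableSet_Ioi fun r (hr : 0 < r) => ?_).trans
    (setLIntegral_le_lintegral _ _)
  rcases lt_or_ge R r with hRr | hrR
  · simp [hR r hRr]
  · gcongr

/-- The space `ℝ^k × ℝ^d` containing the tube `{w | ‖w.1‖ ≤ 1, 9 ≤ ‖w.2‖ ≤ 11}`. -/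
abbrev TubeSpace (k d : ℕ) := (Fin k → ℝ) × EuclideanSpace ℝ (Fin d)

/-- The cube coordinates of a point: they run over the unit cube exactly when the point runs over
the tube around the sphere `{w | w.1 = 0, ‖w.2‖ = 10}`. -/
def tubeCoord {k d : ℕ} (w : TubeSpace k d) : CubeSpace k := (w.1, ‖w.2‖ - 10)

section TubeCoord

variable {k d : ℕ}

theorem lipschitzWith_tubeCoord : LipschitzWith 1 (tubeCoord (k := k) (d := d)) :=
  LipschitzWith.of_dist_le_mul fun x y => by
    rw [NNReal.coe_one, one_mul, Prod.dist_eq, Prod.dist_eq, dist_eq_norm x.2]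
    refine max_le_max le_rfl ?_
    rw [tubeCoord, tubeCoord, Real.dist_eq, sub_sub_sub_cancel_right]
    exact abs_norm_sub_norm_le x.2 y.2

theorem continuous_tubeCoord : Continuous (tubeCoord (k := k) (d := d)) :=
  lipschitzWith_tubeCoord.continuous

theorem contDiffAt_tubeCoord {r : WithTop ℕ∞} {w : TubeSpace k d} (hw : w.2 ≠ 0) :
    ContDiffAt ℝ r tubeCoord w :=
  contDiffAt_fst.prodMk <| ((contDiffAt_norm ℝ hw).comp w contDiffAt_snd).sub contDiffAt_const

theorem one_le_norm_tubeCoord {w : TubeSpace k d} (h : 1 ≤ ‖w.1‖ ∨ ‖w.2‖ ≤ 9 ∨ 11 ≤ ‖w.2‖) :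
    1 ≤ ‖tubeCoord w‖ := by
  rcases h with h | h
  · exact h.trans (norm_fst_le (tubeCoord w))
  · refine le_trans ?_ (norm_snd_le (tubeCoord w))
    rw [tubeCoord, Real.norm_eq_abs, le_abs]
    rcases h with h | h
    · exact .inr (by linarith)
    · exact .inl (by linarith)

theorem exists_lintegral_comp_tubeCoord_le [NeZero d] : ∃ C : ℝ≥0∞, C ≠ ⊤ ∧
    ∀ G : CubeSpace k → ℝ≥0∞, Measurable G → (∀ x, 1 < ‖x‖ → G x = 0) →
      ∫⁻ w : TubeSpace k d, G (tubeCoord w) ≤ C * ∫⁻ x, G x := by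
  have : Nonempty (Fin d) := ⟨0⟩
  refine ⟨Module.finrank ℝ (EuclideanSpace ℝ (Fin d)) *
    volume (ball (0 : EuclideanSpace ℝ (Fin d)) 1) *
    ENNReal.ofReal (11 ^ (Module.finrank ℝ (EuclideanSpace ℝ (Fin d)) - 1)), ?_, fun G hG hG₀ => ?_⟩
  · have : volume (ball (0 : EuclideanSpace ℝ (Fin d)) 1) ≠ ⊤ := measure_ball_lt_top.ne
    finiteness
  have hline (y : Fin k → ℝ) : ∫⁻ r, G (y, r - 10) = ∫⁻ r, G (y, r) :=
    lintegral_sub_right_eq_self (fun r => G (y, r)) 10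
  have hGt : Measurable fun w : TubeSpace k d => G (tubeCoord w) :=
    hG.comp continuous_tubeCoord.measurable
  have hGy : Measurable fun y => ∫⁻ r, G (y, r) := hG.lintegral_prod_right'
  rw [Measure.volume_eq_prod, lintegral_prod _ hGt.aemeasurable,
    Measure.volume_eq_prod, lintegral_prod _ hG.aemeasurable, ← lintegral_const_mul _ hGy]
  refine lintegral_mono fun y => ?_
  rw [mul_assoc, ← hline]
  refine lintegral_fun_norm_le volume (h := fun r => G (y, r - 10)) (by fun_prop) fun r hr => ?_
  refine hG₀ _ (lt_of_lt_of_le ?_ (norm_snd_le _))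
  exact lt_abs.2 (.inl (by linarith))

end TubeCoord

namespace CubeLoop

variable {k d ν : ℕ} {p : ℝ} {N : Set (EuclideanSpace ℝ (Fin ν))} {b : N}

theorem comp_tubeCoord_eventuallyEq (f : CubeLoop k b) {w : TubeSpace k d} (hw : w.2 = 0) :
    f ∘ tubeCoord =ᶠ[𝓝 w] fun _ => (b : EuclideanSpace ℝ (Fin ν)) := by
  have hnhds : {y : TubeSpace k d | ‖y.2‖ < 9} ∈ 𝓝 w :=
    (isOpen_lt (by fun_prop) continuous_const).mem_nhds (by simp [hw])
  filter_upwards [hnhds] with y hy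
  exact f.eq_base (one_le_norm_tubeCoord (.inr (.inl (le_of_lt hy))))

theorem contDiff_comp_tubeCoord {r : WithTop ℕ∞} {f : CubeLoop k b} (hf : ContDiff ℝ r f) :
    ContDiff ℝ r (f ∘ tubeCoord (d := d)) :=
  contDiff_iff_contDiffAt.2 fun w => by
    by_cases hw : w.2 = 0
    · exact contDiffAt_const.congr_of_eventuallyEq (f.comp_tubeCoord_eventuallyEq hw)
    · exact hf.contDiffAt.comp w (contDiffAt_tubeCoord hw)

theorem norm_fderiv_comp_tubeCoord_le {f : CubeLoop k b} (hf : Differentiable ℝ f)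
    (w : TubeSpace k d) : ‖fderiv ℝ (f ∘ tubeCoord) w‖ ≤ ‖fderiv ℝ f (tubeCoord w)‖ := by
  by_cases hw : w.2 = 0
  · rw [(f.comp_tubeCoord_eventuallyEq hw).fderiv_eq, fderiv_const_apply, norm_zero]
    exact norm_nonneg _
  · rw [fderiv_comp w (hf _) ((contDiffAt_tubeCoord hw).differentiableAt one_ne_zero)]
    exact (ContinuousLinearMap.opNorm_comp_le _ _).trans <| mul_le_of_le_one_right (norm_nonneg _)
      (norm_fderiv_le_of_lipschitz ℝ lipschitzWith_tubeCoord)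

theorem exists_dirichletEnergy_comp_tubeCoord_le [NeZero d] (hp : 0 < p) :
    ∃ C : ℝ≥0∞, C ≠ ⊤ ∧ ∀ f : CubeLoop k b, ContDiff ℝ 1 f →
      dirichletEnergy p (f ∘ tubeCoord (d := d)) ≤ C * dirichletEnergy p f := by
  obtain ⟨C, hC, hle⟩ := exists_lintegral_comp_tubeCoord_le (k := k) (d := d)
  refine ⟨C, hC, fun f hf => le_trans (lintegral_mono fun w => ?_) <|
    hle (fun x => ‖fderiv ℝ f x‖ₑ ^ p) ?_ fun x hx =>
      enorm_fderiv_rpow_eq_zero hp (f.fderiv_eq_zero hx)⟩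
  · refine ENNReal.rpow_le_rpow ?_ hp.le
    rw [← ofReal_norm, ← ofReal_norm]
    exact ENNReal.ofReal_le_ofReal (norm_fderiv_comp_tubeCoord_le (hf.differentiable one_ne_zero) w)
  · exact ((hf.continuous_fderiv one_ne_zero).enorm.measurable).pow_const p

end CubeLoop

theorem exists_tubeCoord_eq {k d : ℕ} [NeZero d] {z : CubeSpace k} (hz : ‖z‖ ≤ 1) :
    ∃ w : TubeSpace k d, tubeCoord w = z ∧ ‖w‖ ≤ 11 := by
  have : Nonempty (Fin d) := ⟨0⟩
  have hz₁ : ‖z.1‖ ≤ 1 := (norm_fst_le z).trans hz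
  have hz₂ := abs_le.1 ((norm_snd_le z).trans hz)
  obtain ⟨v, hv⟩ := exists_norm_eq (EuclideanSpace ℝ (Fin d)) (by linarith : 0 ≤ 10 + z.2)
  refine ⟨(z.1, v), Prod.ext rfl ?_, ?_⟩
  · simp only [tubeCoord, hv, add_sub_cancel_left]
  · rw [Prod.norm_mk, hv]
    exact max_le (by linarith) (by linarith)

theorem dirichletEnergy_add_le {E F : Type*} [NormedAddCommGroup E] [NormedSpace ℝ E]
    [MeasureSpace E] [OpensMeasurableSpace E] [NormedAddCommGroup F] [NormedSpace ℝ F]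
    {p : ℝ} (hp : 1 ≤ p) {f g : E → F} (hf : ContDiff ℝ 1 f) (hg : Differentiable ℝ g) :
    dirichletEnergy p (f + g) ≤ 2 ^ (p - 1) * (dirichletEnergy p f + dirichletEnergy p g) := by
  have hmeas : Measurable fun x => ‖fderiv ℝ f x‖ₑ ^ p :=
    (hf.continuous_fderiv one_ne_zero).enorm.measurable.pow_const p
  have htop : (2 : ℝ≥0∞) ^ (p - 1) ≠ ⊤ :=
    ENNReal.rpow_ne_top_of_nonneg (sub_nonneg.2 hp) ENNReal.ofNat_ne_top
  rw [dirichletEnergy, dirichletEnergy, dirichletEnergy, ← lintegral_add_left hmeas,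
    ← lintegral_const_mul' _ _ htop]
  refine lintegral_mono fun x => ?_
  rw [fderiv_add (hf.differentiable one_ne_zero x) (hg x)]
  exact (ENNReal.rpow_le_rpow (enorm_add_le (fderiv ℝ f x) (fderiv ℝ g x)) (by linarith)).trans
    (ENNReal.rpow_add_le_mul_rpow_add_rpow _ _ hp)

theorem exists_equiv_tubeSpace {n k d : ℕ} (h : n = k + d) (R : ℝ) :
    ∃ e : EuclideanSpace ℝ (Fin n) ≃L[ℝ] TubeSpace k d, ∀ x, ‖e x‖ ≤ R → ‖x‖ < 1 := by
  let e₀ : EuclideanSpace ℝ (Fin n) ≃L[ℝ] TubeSpace k d :=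
    ContinuousLinearEquiv.ofFinrankEq (by simp [h, Module.finrank_prod])
  let K := ‖(e₀.symm : TubeSpace k d →L[ℝ] EuclideanSpace ℝ (Fin n))‖
  have hc : 0 < (|R| + 1) * (K + 1) := by positivity
  refine ⟨e₀.trans (.smulLeft (Units.mk0 _ hc.ne')), fun x hx => ?_⟩
  have hKx : ‖x‖ ≤ K * ‖e₀ x‖ := by
    simpa only [ContinuousLinearEquiv.coe_coe, e₀.symm_apply_apply] using
      (e₀.symm : TubeSpace k d →L[ℝ] EuclideanSpace ℝ (Fin n)).le_opNorm (e₀ x)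
  replace hx : (|R| + 1) * (K + 1) * ‖e₀ x‖ ≤ R := by
    have := hx
    rwa [ContinuousLinearEquiv.trans_apply, ContinuousLinearEquiv.smulLeft_apply_apply,
      Units.smul_mk0, norm_smul, Real.norm_of_nonneg hc.le] at this
  have hKe : 0 ≤ K * ‖e₀ x‖ := by positivity
  nlinarith [hKe, le_abs_self R, norm_nonneg (e₀ x), abs_nonneg R]

/-- The map `B̄^n → N` obtained by spreading the loop `f` over a tube, and a second, fixed loop `f₀`
over a disjoint tube three times smaller. The chart `e` turns the domain into `ℝ^k × ℝ^d`. Off one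
of the two tubes the corresponding loop takes the value `b`, so the sum is in fact `N`-valued. -/
def tubeMap {n k d ν : ℕ} {N : Set (EuclideanSpace ℝ (Fin ν))} {b : N}
    (e : EuclideanSpace ℝ (Fin n) ≃L[ℝ] TubeSpace k d) (f f₀ : CubeLoop k b)
    (x : EuclideanSpace ℝ (Fin n)) : EuclideanSpace ℝ (Fin ν) :=
  f (tubeCoord (e x)) + (f₀ (tubeCoord ((3 : ℝ) • e x)) - b)

section TubeMap

variable {n k d ν : ℕ} {N : Set (EuclideanSpace ℝ (Fin ν))} {b : N}
  {e : EuclideanSpace ℝ (Fin n) ≃L[ℝ] TubeSpace k d} {f f₀ : CubeLoop k b}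
  {x : EuclideanSpace ℝ (Fin n)} {s p : ℝ}

theorem tubeMap_of_six_le (hx : 6 ≤ ‖(e x).2‖) : tubeMap e f f₀ x = f (tubeCoord (e x)) := by
  have h : 1 ≤ ‖tubeCoord ((3 : ℝ) • e x)‖ := by
    refine one_le_norm_tubeCoord (.inr (.inr ?_))
    rw [Prod.smul_snd, norm_smul, Real.norm_ofNat]
    linarith
  rw [tubeMap, f₀.eq_base h, sub_self, add_zero]

theorem tubeMap_of_le_nine (hx : ‖(e x).2‖ ≤ 9) :
    tubeMap e f f₀ x = f₀ (tubeCoord ((3 : ℝ) • e x)) := by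
  rw [tubeMap, f.eq_base (one_le_norm_tubeCoord (.inr (.inl hx))), add_sub_cancel]

theorem tubeMap_mem (x : EuclideanSpace ℝ (Fin n)) : tubeMap e f f₀ x ∈ N := by
  rcases le_total ‖(e x).2‖ 9 with h | h
  · rw [tubeMap_of_le_nine h]
    exact f₀.mem _
  · rw [tubeMap_of_six_le (by linarith)]
    exact f.mem _

theorem tubeMap_of_fifteen_lt (hx : 15 < ‖e x‖) : tubeMap e f f₀ x = b := by
  have hsmul (c : ℝ) (hc : 1 ≤ c) : 1 ≤ ‖tubeCoord (c • e x)‖ := by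
    refine one_le_norm_tubeCoord ((lt_max_iff.1 hx).imp (fun h => ?_) fun h => .inr ?_)
    all_goals
      rw [Prod.smul_def, norm_smul, Real.norm_of_nonneg (zero_le_one.trans hc)]
      nlinarith
  have h₁ := hsmul 1 le_rfl
  rw [one_smul] at h₁
  rw [tubeMap, f.eq_base h₁, f₀.eq_base (hsmul 3 (by norm_num)), add_sub_cancel]

theorem tubeMap_eq_add : tubeMap e f f₀ =
    (f ∘ tubeCoord) ∘ e +
      fun x => ((f₀ ∘ tubeCoord) ∘ e.trans (.smulLeft (Units.mk0 (3 : ℝ) three_ne_zero))) x - b :=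
  rfl

theorem contDiff_tubeMap {r : WithTop ℕ∞} (hf : ContDiff ℝ r f) (hf₀ : ContDiff ℝ r f₀) :
    ContDiff ℝ r (tubeMap e f f₀) := by
  rw [tubeMap_eq_add]
  exact ((CubeLoop.contDiff_comp_tubeCoord hf).comp e.contDiff).add
    (((CubeLoop.contDiff_comp_tubeCoord hf₀).comp (ContinuousLinearEquiv.contDiff _)).sub
      contDiff_const)

theorem exists_dirichletEnergy_tubeMap_le [NeZero d] (hp : 1 ≤ p)
    (e : EuclideanSpace ℝ (Fin n) ≃L[ℝ] TubeSpace k d) : ∃ C : ℝ≥0∞, C ≠ ⊤ ∧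
      ∀ f f₀ : CubeLoop k b, ContDiff ℝ 1 f → ContDiff ℝ 1 f₀ →
        dirichletEnergy p (tubeMap e f f₀) ≤ C * (dirichletEnergy p f + dirichletEnergy p f₀) := by
  have hp₀ : 0 < p := one_pos.trans_le hp
  let e₃ := e.trans (.smulLeft (Units.mk0 (3 : ℝ) three_ne_zero))
  obtain ⟨C, hC, hle⟩ :=
    CubeLoop.exists_dirichletEnergy_comp_tubeCoord_le (k := k) (d := d) (b := b) hp₀
  obtain ⟨C₁, hC₁, hle₁⟩ :=
    exists_dirichletEnergy_comp_equiv_le (F := EuclideanSpace ℝ (Fin ν)) hp₀.le e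
  obtain ⟨C₃, hC₃, hle₃⟩ :=
    exists_dirichletEnergy_comp_equiv_le (F := EuclideanSpace ℝ (Fin ν)) hp₀.le e₃
  have htop : (2 : ℝ≥0∞) ^ (p - 1) ≠ ⊤ :=
    ENNReal.rpow_ne_top_of_nonneg (sub_nonneg.2 hp) ENNReal.ofNat_ne_top
  refine ⟨2 ^ (p - 1) * ((C₁ + C₃) * C), by finiteness, fun f f₀ hf hf₀ => ?_⟩
  have hsmooth : ContDiff ℝ 1 ((f ∘ tubeCoord) ∘ e) :=
    (CubeLoop.contDiff_comp_tubeCoord hf).comp e.contDiff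
  have hsmooth₃ : ContDiff ℝ 1 fun x => ((f₀ ∘ tubeCoord) ∘ e₃) x - b :=
    ((CubeLoop.contDiff_comp_tubeCoord hf₀).comp e₃.contDiff).sub contDiff_const
  have hsub : dirichletEnergy p (fun x => ((f₀ ∘ tubeCoord) ∘ e₃) x - b) =
      dirichletEnergy p ((f₀ ∘ tubeCoord) ∘ e₃) := by
    simp only [dirichletEnergy, fderiv_sub_const]
  calc dirichletEnergy p (tubeMap e f f₀)
      ≤ 2 ^ (p - 1) * (dirichletEnergy p ((f ∘ tubeCoord) ∘ e) +
          dirichletEnergy p ((f₀ ∘ tubeCoord) ∘ e₃)) :=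
        hsub ▸ dirichletEnergy_add_le hp hsmooth (hsmooth₃.differentiable one_ne_zero)
    _ ≤ 2 ^ (p - 1) * (C₁ * (C * dirichletEnergy p f) + C₃ * (C * dirichletEnergy p f₀)) := by
        gcongr
        · exact (hle₁ _).trans (mul_le_mul_right (hle f hf) _)
        · exact (hle₃ _).trans (mul_le_mul_right (hle f₀ hf₀) _)
    _ ≤ 2 ^ (p - 1) * ((C₁ + C₃) * (C * dirichletEnergy p f) +
          (C₁ + C₃) * (C * dirichletEnergy p f₀)) := by
        gcongr
        · exact le_self_add
        · exact le_add_self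
    _ = _ := by ring

theorem exists_gagliardoE_tubeMap_le [NeZero n] [NeZero d] (hN : IsCompact N) (hp : 1 ≤ p)
    (hs : s ∈ Ioo (0 : ℝ) 1) {A : Set (EuclideanSpace ℝ (Fin n))} (hA : volume A ≠ ⊤)
    (e : EuclideanSpace ℝ (Fin n) ≃L[ℝ] TubeSpace k d) (hf₀ : ContDiff ℝ 1 f₀) :
    ∃ C : ℝ≥0∞, C ≠ ⊤ ∧ ∀ f : CubeLoop k b, ContDiff ℝ 1 f →
      gagliardoE s p A (tubeMap e f f₀) ≤ C * (1 + dirichletEnergy p f) ^ s := by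
  have hp₀ : 0 < p := one_pos.trans_le hp
  obtain ⟨C, hC, hle⟩ := exists_gagliardoE_le_rpow_dirichletEnergy (ν := ν) hp hs hA
    hN.isBounded.ediam_ne_top
  obtain ⟨K, hK, henergy⟩ := exists_dirichletEnergy_tubeMap_le (b := b) hp e
  set E₀ := dirichletEnergy p f₀
  have hE₀_top : E₀ ≠ ⊤ := CubeLoop.dirichletEnergy_ne_top hp₀ hf₀
  refine ⟨C * ((1 + K) * (1 + E₀)) ^ s,
    ENNReal.mul_ne_top hC (ENNReal.rpow_ne_top_of_nonneg hs.1.le (by finiteness)), fun f hf => ?_⟩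
  have hE : dirichletEnergy p f ≠ ⊤ := CubeLoop.dirichletEnergy_ne_top hp₀ hf
  have hEu := henergy f f₀ hf hf₀
  refine (hle _ (contDiff_tubeMap hf hf₀) (fun x y => edist_le_ediam_of_mem (tubeMap_mem x)
    (tubeMap_mem y)) (ne_top_of_le_ne_top (by finiteness) hEu)).trans ?_
  rw [mul_assoc, ← ENNReal.mul_rpow_of_nonneg _ _ hs.1.le]
  refine mul_le_mul_right (ENNReal.rpow_le_rpow ?_ hs.1.le) _
  calc 1 + dirichletEnergy p (tubeMap e f f₀)
      ≤ 1 + K * (dirichletEnergy p f + E₀) := by gcongr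
    _ ≤ 1 + K * (dirichletEnergy p f + E₀) +
        (K + E₀ + dirichletEnergy p f + (1 + K) * E₀ * dirichletEnergy p f) := le_self_add
    _ = (1 + K) * (1 + E₀) * (1 + dirichletEnergy p f) := by ring

theorem exists_pos_forall_le_gagliardoE_tubeMap [NeZero d] (he : ∀ x, ‖e x‖ ≤ 15 → ‖x‖ < 1)
    (hp : 0 ≤ p) {z : CubeSpace k} (hz : f₀ z ≠ b) :
    ∃ c : ℝ≥0∞, 0 < c ∧ ∀ f : CubeLoop k b, c ≤ gagliardoE s p (ball 0 1) (tubeMap e f f₀) := by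
  let u := fun x => f₀ (tubeCoord ((3 : ℝ) • e x))
  have hu : Continuous u := f₀.continuous.comp (continuous_tubeCoord.comp (by fun_prop))
  let A : Set (EuclideanSpace ℝ (Fin n)) := {x | ‖(e x).2‖ < 9} ∩ ball 0 1
  have hA : IsOpen A := (isOpen_lt (by fun_prop) continuous_const).inter isOpen_ball
  have hz₁ : ‖z‖ ≤ 1 := le_of_lt (not_le.1 fun h => hz (f₀.eq_base h))
  obtain ⟨w, hwz, hw⟩ := exists_tubeCoord_eq (d := d) hz₁
  have hx : e (e.symm ((3 : ℝ)⁻¹ • w)) = (3 : ℝ)⁻¹ • w := e.apply_symm_apply _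
  have hnorm : ‖(3 : ℝ)⁻¹ • w‖ ≤ 11 / 3 := by
    rw [norm_smul, norm_inv, Real.norm_ofNat]
    linarith
  have hxA : e.symm ((3 : ℝ)⁻¹ • w) ∈ A :=
    ⟨by rw [mem_ofPred, hx]; linarith [norm_snd_le ((3 : ℝ)⁻¹ • w)],
      mem_ball_zero_iff.2 (he _ (by rw [hx]; linarith))⟩
  have hux : u (e.symm ((3 : ℝ)⁻¹ • w)) = f₀ z := by
    simp only [u, hx, smul_inv_smul₀ (three_ne_zero : (3 : ℝ) ≠ 0), hwz]
  have hu₀ : u 0 = b := by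
    simp only [u, map_zero, smul_zero]
    exact f₀.eq_base (one_le_norm_tubeCoord (.inr (.inl (by simp))))
  refine ⟨gagliardoE s p A u, gagliardoE_pos hp hu hA hxA (y := 0) (by simp [A]) ?_, fun f => ?_⟩
  · rwa [hux, hu₀]
  · rw [← gagliardoE_congr hA.measurableSet fun x hx => tubeMap_of_le_nine (f := f) (le_of_lt hx.1)]
    exact gagliardoE_mono_set inter_subset_right

end TubeMap

/-! ### Slicing an extension -/

/-- A smooth approximation of the positive part of `s`: it vanishes for `s ≤ 0` and equals `s` for
`ε ≤ s`. -/
def smoothPosPart (ε s : ℝ) : ℝ := s * Real.smoothTransition (s / ε)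

section SmoothPosPart

variable {ε s : ℝ}

theorem contDiff_smoothPosPart {r : ℕ∞} (ε : ℝ) : ContDiff ℝ r (smoothPosPart ε) :=
  contDiff_id.mul (Real.smoothTransition.contDiff.comp (contDiff_id.div_const ε))

theorem smoothPosPart_of_nonpos (hε : 0 < ε) (hs : s ≤ 0) : smoothPosPart ε s = 0 := by
  rw [smoothPosPart, Real.smoothTransition.zero_of_nonpos (div_nonpos_of_nonpos_of_nonneg hs hε.le),
    mul_zero]

theorem smoothPosPart_of_le (hε : 0 < ε) (hs : ε ≤ s) : smoothPosPart ε s = s := by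
  rw [smoothPosPart, Real.smoothTransition.one_of_one_le ((one_le_div hε).2 hs), mul_one]

theorem smoothPosPart_mem_Icc (hε : 0 < ε) (hs : s ≤ 1) : smoothPosPart ε s ∈ Icc (0 : ℝ) 1 := by
  rcases le_total s 0 with h | h
  · rw [smoothPosPart_of_nonpos hε h]
    exact ⟨le_rfl, zero_le_one⟩
  · exact ⟨mul_nonneg h (Real.smoothTransition.nonneg _),
      mul_le_one₀ hs (Real.smoothTransition.nonneg _) (Real.smoothTransition.le_one _)⟩

theorem smoothPosPart_eq_mul_div (hε : 0 < ε) (s : ℝ) :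
    smoothPosPart ε s = ε * smoothPosPart 1 (s / ε) := by
  rw [smoothPosPart, smoothPosPart, div_one]
  field_simp

theorem exists_lipschitzWith_smoothPosPart_one : ∃ L, LipschitzWith L (smoothPosPart 1) := by
  have hcont : Continuous (deriv (smoothPosPart 1)) :=
    (contDiff_smoothPosPart (r := 1) 1).continuous_deriv le_rfl
  obtain ⟨B, hB⟩ := isCompact_Icc.exists_bound_of_continuousOn (hcont.continuousOn (s := Icc 0 1))
  refine ⟨(max B 1).toNNReal, lipschitzWith_of_nnnorm_deriv_le
    ((contDiff_smoothPosPart (r := 1) 1).differentiable one_ne_zero) fun x => ?_⟩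
  rw [← NNReal.coe_le_coe, coe_nnnorm, Real.coe_toNNReal _ (le_max_of_le_right zero_le_one)]
  rcases lt_or_ge x 0 with h₀ | h₀
  · have hzero : smoothPosPart 1 =ᶠ[𝓝 x] fun _ => 0 := by
      filter_upwards [gt_mem_nhds h₀] with y hy using smoothPosPart_of_nonpos one_pos hy.le
    rw [hzero.deriv_eq, deriv_const, norm_zero]
    exact le_max_of_le_right zero_le_one
  rcases le_or_gt x 1 with h₁ | h₁
  · exact (hB x ⟨h₀, h₁⟩).trans (le_max_left _ _)
  · have hid : smoothPosPart 1 =ᶠ[𝓝 x] id := by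
      filter_upwards [lt_mem_nhds h₁] with y hy using smoothPosPart_of_le one_pos (le_of_lt hy)
    rw [hid.deriv_eq, deriv_id, norm_one]
    exact le_max_right _ _

theorem exists_forall_lipschitzWith_smoothPosPart :
    ∃ L, ∀ ε > 0, LipschitzWith L (smoothPosPart ε) := by
  obtain ⟨L, hL⟩ := exists_lipschitzWith_smoothPosPart_one
  refine ⟨L, fun ε hε => LipschitzWith.of_dist_le_mul fun x y => ?_⟩
  calc dist (smoothPosPart ε x) (smoothPosPart ε y)
      = ε * dist (smoothPosPart 1 (x / ε)) (smoothPosPart 1 (y / ε)) := by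
        rw [smoothPosPart_eq_mul_div hε, smoothPosPart_eq_mul_div hε y, Real.dist_eq, Real.dist_eq,
          ← mul_sub, abs_mul, abs_of_pos hε]
    _ ≤ ε * (L * dist (x / ε) (y / ε)) := by gcongr; exact hL.dist_le_mul _ _
    _ = L * dist x y := by
        rw [Real.dist_eq, Real.dist_eq, ← sub_div, abs_div, abs_of_pos hε]
        field_simp

end SmoothPosPart

/-- A smooth function on `CubeSpace k` rising from `0` on the ball of radius `1/2` to `1` off the
ball of radius `5/8`. The graph of `t - collar` reaches the bottom of the domain of an extension
over the collar, where the boundary value is constant. -/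
def collar {k : ℕ} (x : CubeSpace k) : ℝ :=
  1 - (⟨1 / 2, 5 / 8, by norm_num, by norm_num⟩ : ContDiffBump (0 : CubeSpace k)) x

section Collar

variable {k : ℕ} {x : CubeSpace k}

theorem contDiff_collar {r : ℕ∞} : ContDiff ℝ r (collar (k := k)) :=
  contDiff_const.sub (ContDiffBump.contDiff _)

theorem collar_nonneg (x : CubeSpace k) : 0 ≤ collar x := sub_nonneg.2 (ContDiffBump.le_one _)

theorem collar_of_norm_le (hx : ‖x‖ ≤ 1 / 2) : collar x = 0 := by
  rw [collar, ContDiffBump.one_of_mem_closedBall _ (mem_closedBall_zero_iff.2 hx), sub_self]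

theorem collar_of_le_norm (hx : 5 / 8 ≤ ‖x‖) : collar x = 1 := by
  rw [collar, ContDiffBump.zero_of_le_dist _ (by rwa [dist_zero_right]), sub_zero]

theorem exists_lipschitzWith_const_sub_collar :
    ∃ L, ∀ t : ℝ, LipschitzWith L fun x : CubeSpace k => t - collar x := by
  let β : ContDiffBump (0 : CubeSpace k) := ⟨1 / 2, 5 / 8, by norm_num, by norm_num⟩
  obtain ⟨L, hL⟩ := ContDiff.lipschitzWith_of_hasCompactSupport (𝕂 := ℝ) β.hasCompactSupport
    (β.contDiff (n := 1)) one_ne_zero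
  refine ⟨L, fun t => LipschitzWith.of_dist_le_mul fun x y => ?_⟩
  rw [dist_sub_left]
  exact (dist_sub_left 1 (β x) (β y)).le.trans (hL.dist_le_mul x y)

end Collar

/-- The affine slice through `TubeSpace k d` containing the axis direction `θ` and translated by
`y`. For `y` in the unit ball it meets the tube in a region on which `x` has norm less than
`1/2`. -/
def slice {k d : ℕ} (θ y : EuclideanSpace ℝ (Fin d)) (x : CubeSpace k) : TubeSpace k d :=
  ((4 : ℝ) • x.1, (10 + 4 * x.2) • θ + y)

section Slice

variable {k d : ℕ} {θ y : EuclideanSpace ℝ (Fin d)} {x : CubeSpace k}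

theorem norm_axis_of_norm_lt (hθ : ‖θ‖ = 1) (hx : ‖x‖ < 3 / 4) :
    ‖(10 + 4 * x.2) • θ‖ = 10 + 4 * x.2 := by
  have := abs_lt.1 ((norm_snd_le x).trans_lt hx)
  rw [norm_smul, hθ, mul_one, Real.norm_of_nonneg (by linarith)]

theorem norm_snd_slice_mem_Icc (hθ : ‖θ‖ = 1) (hy : ‖y‖ ≤ 1) (hx : ‖x‖ < 3 / 4) :
    ‖(slice θ y x).2‖ ∈ Icc (9 + 4 * x.2) (11 + 4 * x.2) := by
  have haxis := norm_axis_of_norm_lt hθ hx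
  have hlower := norm_sub_le_norm_add ((10 + 4 * x.2) • θ) y
  have hupper := norm_add_le ((10 + 4 * x.2) • θ) y
  constructor <;> rw [slice] <;> linarith

theorem six_le_norm_snd_slice (hθ : ‖θ‖ = 1) (hy : ‖y‖ ≤ 1) (hx : ‖x‖ < 3 / 4) :
    6 ≤ ‖(slice θ y x).2‖ := by
  have := abs_lt.1 ((norm_snd_le x).trans_lt hx)
  linarith [(norm_snd_slice_mem_Icc hθ hy hx).1]

theorem norm_slice_le (hθ : ‖θ‖ = 1) (hy : ‖y‖ ≤ 1) (hx : ‖x‖ < 3 / 4) : ‖slice θ y x‖ ≤ 15 := by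
  have := abs_lt.1 ((norm_snd_le x).trans_lt hx)
  refine max_le ?_ (by linarith [(norm_snd_slice_mem_Icc hθ hy hx).2])
  rw [slice, norm_smul, Real.norm_ofNat]
  linarith [norm_fst_le x]

theorem one_le_norm_tubeCoord_slice (hθ : ‖θ‖ = 1) (hy : ‖y‖ ≤ 1) (hx : ‖x‖ < 3 / 4)
    (hx' : 1 / 2 ≤ ‖x‖) : 1 ≤ ‖tubeCoord (slice θ y x)‖ := by
  have hmem := norm_snd_slice_mem_Icc hθ hy hx
  refine one_le_norm_tubeCoord ((le_max_iff.1 hx').imp (fun h => ?_) fun h => ?_)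
  · rw [slice, norm_smul, Real.norm_ofNat]
    linarith
  · rcases le_abs.1 h with h | h
    · exact .inr (by linarith [hmem.1])
    · exact .inl (by linarith [hmem.2])

theorem tubeCoord_slice_zero (hθ : ‖θ‖ = 1) (hx : ‖x‖ < 3 / 4) :
    tubeCoord (slice θ 0 x) = (4 : ℝ) • x := by
  rw [tubeCoord, slice, add_zero, norm_axis_of_norm_lt hθ hx, add_sub_cancel_left]
  rfl

theorem lipschitzWith_slice (hθ : ‖θ‖ = 1) : LipschitzWith 4 (slice (k := k) θ y) :=
  LipschitzWith.of_dist_le_mul fun a c => by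
    rw [slice, slice, Prod.dist_eq, Prod.dist_eq, NNReal.coe_ofNat, dist_smul₀, Real.norm_ofNat,
      dist_add_right, dist_eq_norm _ ((10 + 4 * c.2) • θ), ← sub_smul, norm_smul, hθ, mul_one,
      add_sub_add_left_eq_sub, ← mul_sub, norm_mul, Real.norm_ofNat, ← dist_eq_norm,
      mul_max_of_nonneg _ _ zero_le_four]

theorem contDiff_slice {r : WithTop ℕ∞} : ContDiff ℝ r (slice (k := k) θ y) := by
  unfold slice
  fun_prop

theorem continuous_slice_uncurry (θ : EuclideanSpace ℝ (Fin d)) :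
    Continuous fun q : EuclideanSpace ℝ (Fin d) × CubeSpace k => slice θ q.1 q.2 := by
  unfold slice
  fun_prop

end Slice

section Averaging

variable {n k d : ℕ}

theorem setLIntegral_ball_comp_fst_le {h : (Fin k → ℝ) → ℝ≥0∞} (hh : Measurable h) {r : ℝ}
    (hr : r ≤ 1) : ∫⁻ x in ball (0 : CubeSpace k) r, h x.1 ≤ 2 * ∫⁻ a, h a := by
  have hball : ball (0 : CubeSpace k) r ⊆ univ ×ˢ Icc (-1) 1 := fun x hx =>
    ⟨trivial, abs_le.1 ((norm_snd_le x).trans ((mem_ball_zero_iff.1 hx).le.trans hr))⟩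
  calc ∫⁻ x in ball (0 : CubeSpace k) r, h x.1
      ≤ ∫⁻ x in univ ×ˢ Icc (-1 : ℝ) 1, h x.1 := lintegral_mono_set hball
    _ = ∫⁻ a, ∫⁻ _ in Icc (-1 : ℝ) 1, h a := by
        rw [Measure.volume_eq_prod, ← Measure.prod_restrict, Measure.restrict_univ]
        exact lintegral_prod (fun x : CubeSpace k => h x.1) (hh.comp measurable_fst).aemeasurable
    _ = 2 * ∫⁻ a, h a := by
        rw [← lintegral_const_mul _ hh]
        refine lintegral_congr fun a => ?_
        rw [setLIntegral_const, Real.volume_Icc, mul_comm]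
        norm_num

theorem exists_lintegral_lintegral_slice_le (e : EuclideanSpace ℝ (Fin n) ≃L[ℝ] TubeSpace k d)
    (θ : EuclideanSpace ℝ (Fin d)) : ∃ C : ℝ≥0∞, C ≠ ⊤ ∧
      ∀ ψ : CubeSpace k → ℝ, Continuous ψ →
        ∀ G : EuclideanSpace ℝ (Fin n) × ℝ → ℝ≥0∞, Measurable G →
          ∫⁻ q : EuclideanSpace ℝ (Fin d) × ℝ, ∫⁻ x in ball (0 : CubeSpace k) (3 / 4),
            G (e.symm (slice θ q.1 x), q.2 - ψ x) ≤ C * ∫⁻ z, G z := by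
  let dilation : TubeSpace k d ≃L[ℝ] TubeSpace k d :=
    (ContinuousLinearEquiv.smulLeft (Units.mk0 (4 : ℝ) four_ne_zero)).prodCongr (.refl ℝ _)
  obtain ⟨c, hc, hce⟩ := exists_lintegral_comp_continuousLinearEquiv_eq (dilation.trans e.symm)
  refine ⟨2 * c, by finiteness, fun ψ hψ G hG => ?_⟩
  have hslice := continuous_slice_uncurry (k := k) θ
  let H : TubeSpace k d → ℝ≥0∞ := fun w => ∫⁻ τ, G (e.symm w, τ)
  have hH : Measurable fun w => H (dilation w) := by
    have : Measurable fun q : TubeSpace k d × ℝ => G (e.symm (dilation q.1), q.2) :=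
      hG.comp (Continuous.measurable (by fun_prop))
    exact this.lintegral_prod_right'
  have hfiber (x : CubeSpace k) :
      ∫⁻ q : EuclideanSpace ℝ (Fin d) × ℝ, G (e.symm (slice θ q.1 x), q.2 - ψ x) =
        ∫⁻ a, H (dilation (x.1, a)) := by
    have hmeas : Measurable fun q : EuclideanSpace ℝ (Fin d) × ℝ =>
        G (e.symm (slice θ q.1 x), q.2 - ψ x) :=
      hG.comp (Continuous.measurable (by fun_prop))
    rw [Measure.volume_eq_prod, lintegral_prod _ hmeas.aemeasurable]
    refine (lintegral_congr fun y => ?_).trans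
      (lintegral_add_left_eq_self (fun a => H (dilation (x.1, a))) ((10 + 4 * x.2) • θ))
    exact lintegral_sub_right_eq_self (fun t => G (e.symm (slice θ y x), t)) (ψ x)
  have hmeas : Measurable fun q : (EuclideanSpace ℝ (Fin d) × ℝ) × CubeSpace k =>
      G (e.symm (slice θ q.1.1 q.2), q.1.2 - ψ q.2) :=
    hG.comp (Continuous.measurable (by fun_prop))
  calc _ = ∫⁻ x in ball (0 : CubeSpace k) (3 / 4), ∫⁻ a, H (dilation (x.1, a)) := by
        rw [lintegral_lintegral_swap hmeas.aemeasurable]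
        exact lintegral_congr hfiber
    _ ≤ 2 * ∫⁻ w, H (dilation w) := by
        rw [Measure.volume_eq_prod (α := Fin k → ℝ) (β := EuclideanSpace ℝ (Fin d)),
          lintegral_prod _ hH.aemeasurable]
        exact setLIntegral_ball_comp_fst_le hH.lintegral_prod_right' (by norm_num)
    _ = 2 * (c * ∫⁻ z, ∫⁻ τ, G (z, τ)) := by rw [← hce]; rfl
    _ = 2 * c * ∫⁻ z, G z := by
        rw [Measure.volume_eq_prod, lintegral_prod _ hG.aemeasurable, mul_assoc]

theorem exists_slice_lintegral_le (e : EuclideanSpace ℝ (Fin n) ≃L[ℝ] TubeSpace k d)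
    (θ : EuclideanSpace ℝ (Fin d)) : ∃ C : ℝ≥0∞, C ≠ ⊤ ∧
      ∀ ψ : CubeSpace k → ℝ, Continuous ψ →
        ∀ G : EuclideanSpace ℝ (Fin n) × ℝ → ℝ≥0∞, Measurable G →
          ∃ y ∈ ball (0 : EuclideanSpace ℝ (Fin d)) 1, ∃ t ∈ Ioo (1 / 2 : ℝ) 1,
            ∫⁻ x in ball (0 : CubeSpace k) (3 / 4), G (e.symm (slice θ y x), t - ψ x) ≤
              C * ∫⁻ z, G z := by
  obtain ⟨C, hC, hle⟩ := exists_lintegral_lintegral_slice_le e θ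
  let S : Set (EuclideanSpace ℝ (Fin d) × ℝ) := ball 0 1 ×ˢ Ioo (1 / 2) 1
  have hS₀ : volume S ≠ 0 :=
    ((isOpen_ball.prod isOpen_Ioo).measure_pos _
      ((nonempty_ball.2 one_pos).prod (nonempty_Ioo.2 one_half_lt_one))).ne'
  have hS : volume S ≠ ⊤ := (isBounded_ball.prod (isBounded_Ioo _ _)).measure_lt_top.ne
  have hS_inv : (volume S)⁻¹ ≠ ⊤ := ENNReal.inv_ne_top.2 hS₀
  refine ⟨(volume S)⁻¹ * C, by finiteness, fun ψ hψ G hG => ?_⟩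
  have hslice := continuous_slice_uncurry (k := k) θ
  have hmeas : Measurable fun q : (EuclideanSpace ℝ (Fin d) × ℝ) × CubeSpace k =>
      G (e.symm (slice θ q.1.1 q.2), q.1.2 - ψ q.2) :=
    hG.comp (Continuous.measurable (by fun_prop))
  have hmeas_slice : Measurable fun q : EuclideanSpace ℝ (Fin d) × ℝ =>
      ∫⁻ x in ball (0 : CubeSpace k) (3 / 4), G (e.symm (slice θ q.1 x), q.2 - ψ x) :=
    hmeas.lintegral_prod_right'
  obtain ⟨q, hq, hqle⟩ := exists_le_setLAverage hS₀ hS hmeas_slice.aemeasurable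
  refine ⟨q.1, hq.1, q.2, hq.2, hqle.trans ?_⟩
  rw [setLAverage_eq, ENNReal.div_eq_inv_mul, mul_assoc]
  exact mul_le_mul_right ((setLIntegral_le_lintegral _ _).trans (hle ψ hψ G hG)) _

end Averaging

section Cutoff

variable {k : ℕ} {F : Type*} {b : F} {g : CubeSpace k → F} {x : CubeSpace k}

/-- The map equal to `g` on the open ball of radius `3/4` and to `b` off it. -/
def cutoff (b : F) (g : CubeSpace k → F) (x : CubeSpace k) : F := if ‖x‖ < 3 / 4 then g x else b

theorem cutoff_of_lt (hx : ‖x‖ < 3 / 4) : cutoff b g x = g x := if_pos hx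

theorem cutoff_of_le (hx : 3 / 4 ≤ ‖x‖) : cutoff b g x = b := if_neg hx.not_gt

theorem cutoff_eq_const (h : ‖x‖ < 3 / 4 → g x = b) : cutoff b g x = b := by
  unfold cutoff
  split_ifs with hx
  exacts [h hx, rfl]

theorem cutoff_eventuallyEq (hx : ‖x‖ < 3 / 4) : cutoff b g =ᶠ[𝓝 x] g := by
  filter_upwards [(isOpen_lt continuous_norm continuous_const).mem_nhds hx] with z hz
    using cutoff_of_lt hz

theorem cutoff_mem {N : Set F} (hb : b ∈ N) (hg : ∀ x, ‖x‖ < 3 / 4 → g x ∈ N) (x : CubeSpace k) :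
    cutoff b g x ∈ N := by
  unfold cutoff
  split_ifs with hx
  exacts [hg x hx, hb]

theorem continuous_cutoff_uncurry {X : Type*} [TopologicalSpace X] [TopologicalSpace F]
    {Φ : X × CubeSpace k → F} (hΦ : ∀ q : X × CubeSpace k, ‖q.2‖ < 3 / 4 → ContinuousAt Φ q)
    (hb : ∀ s x, 5 / 8 ≤ ‖x‖ → ‖x‖ < 3 / 4 → Φ (s, x) = b) :
    Continuous fun q : X × CubeSpace k => cutoff b (fun x => Φ (q.1, x)) q.2 := by
  refine continuous_iff_continuousAt.2 fun q => ?_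
  rcases lt_or_ge ‖q.2‖ (3 / 4) with hq | hq
  · refine (hΦ q hq).congr ?_
    filter_upwards [continuous_snd.norm.continuousAt.eventually_lt_const hq] with r hr
      using (cutoff_of_lt (g := fun x => Φ (r.1, x)) hr).symm
  · have hq' : 5 / 8 < ‖q.2‖ := by linarith
    refine (continuousAt_const (y := b)).congr ?_
    filter_upwards [continuous_snd.norm.continuousAt.eventually_const_lt hq'] with r hr
      using (cutoff_eq_const (hb r.1 r.2 (le_of_lt hr))).symm

end Cutoff

/-- `U` is a `C^1` extension of `u : B̄^n → N` to the cylinder, as in the definition of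
`extEnergy`. -/
structure IsC1Extension {n ν : ℕ} (N : Set (EuclideanSpace ℝ (Fin ν)))
    (U : EuclideanSpace ℝ (Fin n) × ℝ → EuclideanSpace ℝ (Fin ν))
    (u : EuclideanSpace ℝ (Fin n) → EuclideanSpace ℝ (Fin ν)) : Prop where
  c1OnNhd : C1OnNhd U (closedBall 0 1 ×ˢ Icc (0 : ℝ) 1)
  mapsTo : MapsTo U (closedBall 0 1 ×ˢ Icc (0 : ℝ) 1) N
  apply_zero : ∀ x ∈ closedBall (0 : EuclideanSpace ℝ (Fin n)) 1, U (x, 0) = u x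

/-- The graph of `smoothPosPart ε (t - collar x)` over an affine slice of the tube. -/
def graphSlice {n k d : ℕ} (e : EuclideanSpace ℝ (Fin n) ≃L[ℝ] TubeSpace k d)
    (θ y : EuclideanSpace ℝ (Fin d)) (t ε : ℝ) (x : CubeSpace k) : EuclideanSpace ℝ (Fin n) × ℝ :=
  (e.symm (slice θ y x), smoothPosPart ε (t - collar x))

/-- The homotopy sliding `graphSlice e θ y t ε` at time `1` to the slice through the axis at height
`0` at time `0`. -/
def graphHomotopy {n k d : ℕ} (e : EuclideanSpace ℝ (Fin n) ≃L[ℝ] TubeSpace k d)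
    (θ y : EuclideanSpace ℝ (Fin d)) (t ε : ℝ) (q : unitInterval × CubeSpace k) :
    EuclideanSpace ℝ (Fin n) × ℝ :=
  (e.symm (slice θ ((q.1 : ℝ) • y) q.2), q.1 * smoothPosPart ε (t - collar q.2))

namespace IsC1Extension

variable {n ν : ℕ} {N : Set (EuclideanSpace ℝ (Fin ν))}
  {U : EuclideanSpace ℝ (Fin n) × ℝ → EuclideanSpace ℝ (Fin ν)}
  {u : EuclideanSpace ℝ (Fin n) → EuclideanSpace ℝ (Fin ν)}

theorem contDiffAt (hU : IsC1Extension N U u) {z : EuclideanSpace ℝ (Fin n) × ℝ}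
    (hz : z ∈ closedBall (0 : EuclideanSpace ℝ (Fin n)) 1 ×ˢ Icc (0 : ℝ) 1) :
    ContDiffAt ℝ 1 U z := by
  obtain ⟨V, hV, hsub, hUV⟩ := hU.c1OnNhd
  exact hUV.contDiffAt (hV.mem_nhds (hsub hz))

theorem exists_enorm_fderiv_le (hU : IsC1Extension N U u) : ∃ M : ℝ≥0∞, M ≠ ⊤ ∧
    ∀ z ∈ closedBall (0 : EuclideanSpace ℝ (Fin n)) 1 ×ˢ Icc (0 : ℝ) 1, ‖fderiv ℝ U z‖ₑ ≤ M := by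
  have hcont : ContinuousOn (fderiv ℝ U) (closedBall 0 1 ×ˢ Icc (0 : ℝ) 1) := fun z hz =>
    ((hU.contDiffAt hz).continuousAt_fderiv one_ne_zero).continuousWithinAt
  obtain ⟨M, hM⟩ :=
    ((isCompact_closedBall _ _).prod isCompact_Icc).exists_bound_of_continuousOn hcont
  exact ⟨ENNReal.ofReal M, ENNReal.ofReal_ne_top, fun z hz =>
    (ofReal_norm _).symm.trans_le (ENNReal.ofReal_le_ofReal (hM z hz))⟩

theorem exists_majorant (hU : IsC1Extension N U u) {p : ℝ} (hp : 0 ≤ p) :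
    ∃ ε > 0, ∃ G : EuclideanSpace ℝ (Fin n) × ℝ → ℝ≥0∞, Measurable G ∧
      (∀ x ∈ ball 0 1, ∀ s ∈ Ico (0 : ℝ) 1, ‖fderiv ℝ U (x, smoothPosPart ε s)‖ₑ ^ p ≤ G (x, s)) ∧
      ∫⁻ z, G z ≤ (∫⁻ z in ball 0 1 ×ˢ Ioo (0 : ℝ) 1, ‖fderiv ℝ U z‖ₑ ^ p) + 1 := by
  obtain ⟨M, hM, hle⟩ := hU.exists_enorm_fderiv_le
  have hvol : M ^ p * volume (ball (0 : EuclideanSpace ℝ (Fin n)) 1) ≠ ⊤ :=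
    ENNReal.mul_ne_top (by finiteness) measure_ball_lt_top.ne
  obtain ⟨ε, hε, hεle⟩ := ENNReal.exists_nnreal_pos_mul_lt hvol one_ne_zero
  have hinner : MeasurableSet (ball (0 : EuclideanSpace ℝ (Fin n)) 1 ×ˢ Ioo (0 : ℝ) 1) :=
    measurableSet_ball.prod measurableSet_Ioo
  have hlayer : MeasurableSet (ball (0 : EuclideanSpace ℝ (Fin n)) 1 ×ˢ Ico (0 : ℝ) ε) :=
    measurableSet_ball.prod measurableSet_Ico
  let G₁ := indicator (ball 0 1 ×ˢ Ioo 0 1) fun z => ‖fderiv ℝ U z‖ₑ ^ p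
  let G₂ : EuclideanSpace ℝ (Fin n) × ℝ → ℝ≥0∞ :=
    indicator (ball 0 1 ×ˢ Ico 0 (ε : ℝ)) fun _ => M ^ p
  have hG₁ : Measurable G₁ := ((measurable_fderiv ℝ U).enorm.pow_const p).indicator hinner
  have hG₂ : Measurable G₂ := measurable_const.indicator hlayer
  refine ⟨ε, NNReal.coe_pos.2 hε, G₁ + G₂, hG₁.add hG₂, fun x hx s hs => ?_, ?_⟩
  · rcases lt_or_ge s ε with hsε | hsε
    · refine le_add_left ?_
      rw [show G₂ (x, s) = M ^ p from indicator_of_mem (mk_mem_prod hx (mem_Ico.2 ⟨hs.1, hsε⟩)) _]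
      gcongr
      exact hle _ ⟨ball_subset_closedBall hx, smoothPosPart_mem_Icc (NNReal.coe_pos.2 hε) hs.2.le⟩
    · refine le_add_right ?_
      have hs' : s ∈ Ioo 0 1 := ⟨(NNReal.coe_pos.2 hε).trans_le hsε, hs.2⟩
      rw [smoothPosPart_of_le (NNReal.coe_pos.2 hε) hsε,
        show G₁ (x, s) = ‖fderiv ℝ U (x, s)‖ₑ ^ p from indicator_of_mem (mk_mem_prod hx hs') _]
  · calc ∫⁻ z, (G₁ + G₂) z = (∫⁻ z, G₁ z) + ∫⁻ z, G₂ z := lintegral_add_left hG₁ _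
      _ ≤ _ := by
        rw [lintegral_indicator hinner, lintegral_indicator hlayer, setLIntegral_const,
          Measure.volume_eq_prod, Measure.prod_prod, Real.volume_Ico, sub_zero,
          ENNReal.ofReal_coe_nnreal, ← mul_assoc, mul_comm _ (ε : ℝ≥0∞)]
        gcongr

end IsC1Extension

theorem norm_unitInterval_smul_le {E : Type*} [NormedAddCommGroup E] [NormedSpace ℝ E] {y : E}
    {r : ℝ} (s : unitInterval) (hy : ‖y‖ ≤ r) : ‖(s : ℝ) • y‖ ≤ r := by
  rw [norm_smul, Real.norm_of_nonneg s.2.1]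
  exact (mul_le_of_le_one_left (norm_nonneg y) s.2.2).trans hy

section GraphSlice

variable {n k d : ℕ} {e : EuclideanSpace ℝ (Fin n) ≃L[ℝ] TubeSpace k d}
  {θ y : EuclideanSpace ℝ (Fin d)} {t ε : ℝ} {x : CubeSpace k}

theorem contDiff_graphSlice {r : ℕ∞} : ContDiff ℝ r (graphSlice e θ y t ε) :=
  (e.symm.contDiff.comp contDiff_slice).prodMk
    ((contDiff_smoothPosPart ε).comp (contDiff_const.sub contDiff_collar))

theorem exists_lipschitzWith_graphSlice (e : EuclideanSpace ℝ (Fin n) ≃L[ℝ] TubeSpace k d)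
    (hθ : ‖θ‖ = 1) : ∃ K, ∀ y t, ∀ ε > 0, LipschitzWith K (graphSlice e θ y t ε) := by
  obtain ⟨L₁, hL₁⟩ := exists_forall_lipschitzWith_smoothPosPart
  obtain ⟨L₂, hL₂⟩ := exists_lipschitzWith_const_sub_collar (k := k)
  exact ⟨_, fun y t ε hε =>
    (e.symm.lipschitz.comp (lipschitzWith_slice hθ)).prodMk ((hL₁ ε hε).comp (hL₂ t))⟩

theorem continuous_graphHomotopy : Continuous (graphHomotopy (k := k) e θ y t ε) := by
  have hslice := continuous_slice_uncurry (k := k) θ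
  have hpos : Continuous (smoothPosPart ε) := (contDiff_smoothPosPart (r := 0) ε).continuous
  have hcollar : Continuous (collar (k := k)) := (contDiff_collar (r := 0)).continuous
  unfold graphHomotopy
  fun_prop

theorem graphHomotopy_one (x : CubeSpace k) :
    graphHomotopy e θ y t ε (1, x) = graphSlice e θ y t ε x := by
  rw [graphHomotopy, graphSlice, Icc.coe_one, one_smul, one_mul]

theorem graphHomotopy_zero (x : CubeSpace k) :
    graphHomotopy e θ y t ε (0, x) = (e.symm (slice θ 0 x), 0) := by
  rw [graphHomotopy, Icc.coe_zero, zero_smul, zero_mul]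

section Homotopy

variable (he : ∀ x, ‖e x‖ ≤ 15 → ‖x‖ < 1) (hθ : ‖θ‖ = 1) (hy : ‖y‖ ≤ 1)
include he hθ hy

theorem symm_slice_mem_ball (hx : ‖x‖ < 3 / 4) :
    e.symm (slice θ y x) ∈ ball (0 : EuclideanSpace ℝ (Fin n)) 1 :=
  mem_ball_zero_iff.2 (he _ (by rw [e.apply_symm_apply]; exact norm_slice_le hθ hy hx))

theorem graphHomotopy_mem (hε : 0 < ε) (ht : t < 1) (s : unitInterval) (hx : ‖x‖ < 3 / 4) :
    graphHomotopy e θ y t ε (s, x) ∈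
      closedBall (0 : EuclideanSpace ℝ (Fin n)) 1 ×ˢ Icc (0 : ℝ) 1 :=
  ⟨ball_subset_closedBall (symm_slice_mem_ball he hθ (norm_unitInterval_smul_le s hy) hx),
    unitInterval.mul_mem s.2 (smoothPosPart_mem_Icc hε (by linarith [collar_nonneg x]))⟩

variable {ν : ℕ} {N : Set (EuclideanSpace ℝ (Fin ν))} {b : N}
  {U : EuclideanSpace ℝ (Fin n) × ℝ → EuclideanSpace ℝ (Fin ν)}
  {u : EuclideanSpace ℝ (Fin n) → EuclideanSpace ℝ (Fin ν)} {f : CubeLoop k b}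
  (hU : IsC1Extension N U u) (hu : ∀ x, 6 ≤ ‖(e x).2‖ → u x = f (tubeCoord (e x)))
include hU hu

theorem IsC1Extension.apply_symm_slice_zero (hx : ‖x‖ < 3 / 4) :
    U (e.symm (slice θ y x), 0) = f (tubeCoord (slice θ y x)) := by
  have hsix : 6 ≤ ‖(e (e.symm (slice θ y x))).2‖ := by
    rw [e.apply_symm_apply]
    exact six_le_norm_snd_slice hθ hy hx
  rw [hU.apply_zero _ (ball_subset_closedBall (symm_slice_mem_ball he hθ hy hx)), hu _ hsix,
    e.apply_symm_apply]

theorem IsC1Extension.apply_symm_slice_zero_eq_base (hx : ‖x‖ < 3 / 4) (hx' : 1 / 2 ≤ ‖x‖) :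
    U (e.symm (slice θ y x), 0) = b := by
  rw [hU.apply_symm_slice_zero he hθ hy hu hx]
  exact f.eq_base (one_le_norm_tubeCoord_slice hθ hy hx hx')

theorem IsC1Extension.continuous_cutoff_graphHomotopy (hε : 0 < ε) (ht : t < 1) :
    Continuous fun q : unitInterval × CubeSpace k =>
      cutoff b.1 (fun x => U (graphHomotopy e θ y t ε (q.1, x))) q.2 := by
  refine continuous_cutoff_uncurry (Φ := fun q => U (graphHomotopy e θ y t ε q))
    (fun q hq => ?_) fun s x hx hx' => ?_
  · exact ContinuousAt.comp
      (hU.contDiffAt (graphHomotopy_mem he hθ hy hε ht q.1 hq)).continuousAt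
      continuous_graphHomotopy.continuousAt
  · rw [graphHomotopy, collar_of_le_norm hx, smoothPosPart_of_nonpos hε (by linarith), mul_zero]
    exact hU.apply_symm_slice_zero_eq_base he hθ (norm_unitInterval_smul_le s hy) hu hx'
      (by linarith)

theorem IsC1Extension.exists_cubeLoop_eq_cutoff (hε : 0 < ε) (ht : t < 1) :
    ∃ w : CubeLoop k b, w.homotopyClass = f.homotopyClass ∧
      ⇑w = cutoff b.1 fun x => U (graphSlice e θ y t ε x) := by
  have hcont := hU.continuous_cutoff_graphHomotopy he hθ hy hu hε ht
  have hmem (q : unitInterval × CubeSpace k) :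
      cutoff b.1 (fun x => U (graphHomotopy e θ y t ε (q.1, x))) q.2 ∈ N :=
    cutoff_mem b.2 (fun _ hx => hU.mapsTo (graphHomotopy_mem he hθ hy hε ht q.1 hx)) _
  have hbase (s : unitInterval) (x : CubeSpace k) (hx : 1 ≤ ‖x‖) :
      cutoff b.1 (fun x => U (graphHomotopy e θ y t ε (s, x))) x = b := cutoff_of_le (by linarith)
  let w : CubeLoop k b := ⟨cutoff b fun x => U (graphHomotopy e θ y t ε (1, x)),
    hcont.comp (continuous_const.prodMk continuous_id), fun x => hmem (1, x), hbase 1⟩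
  refine ⟨w, ?_, ?_⟩
  · rw [← f.homotopyClass_scale (show (1 : ℝ) ≤ 4 by norm_num)]
    refine (CubeLoop.homotopyClass_eq_of_homotopy _ hcont hmem hbase (fun x => ?_)
      fun x => rfl).symm
    rw [CubeLoop.scale_apply]
    rcases lt_or_ge ‖x‖ (3 / 4) with hx | hx
    · rw [cutoff_of_lt hx, graphHomotopy_zero,
        hU.apply_symm_slice_zero he hθ (norm_zero.trans_le zero_le_one) hu hx,
        tubeCoord_slice_zero hθ hx]
    · rw [cutoff_of_le hx, f.eq_base]
      rw [norm_smul, Real.norm_of_nonneg zero_le_four]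
      linarith
  · exact congrArg (cutoff b.1) (funext fun x => congrArg U (graphHomotopy_one x))

theorem IsC1Extension.cutoff_eventuallyEq_base (hε : 0 < ε) (ht : 0 ≤ t) (hx : t < collar x) :
    cutoff b.1 (fun x => U (graphSlice e θ y t ε x)) =ᶠ[𝓝 x] fun _ => b := by
  filter_upwards [(contDiff_collar (r := 0)).continuous.continuousAt.eventually_const_lt hx]
    with z hz
  refine cutoff_eq_const fun hz' => ?_
  have hhalf : 1 / 2 ≤ ‖z‖ := by
    by_contra! hlt
    linarith [collar_of_norm_le hlt.le]
  rw [graphSlice, smoothPosPart_of_nonpos hε (by linarith)]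
  exact hU.apply_symm_slice_zero_eq_base he hθ hy hu hz' hhalf

omit hu in
theorem IsC1Extension.contDiffAt_graphSlice (hε : 0 < ε) (ht : t < 1) (hx : ‖x‖ < 3 / 4) :
    ContDiffAt ℝ 1 U (graphSlice e θ y t ε x) := by
  rw [← graphHomotopy_one]
  exact hU.contDiffAt (graphHomotopy_mem he hθ hy hε ht 1 hx)

theorem IsC1Extension.contDiff_cutoff (hε : 0 < ε) (ht : t ∈ Ico (0 : ℝ) 1) :
    ContDiff ℝ 1 (cutoff b.1 fun x => U (graphSlice e θ y t ε x)) := by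
  refine contDiff_iff_contDiffAt.2 fun x => ?_
  rcases lt_or_ge ‖x‖ (3 / 4) with hx | hx
  · exact ((hU.contDiffAt_graphSlice he hθ hy hε ht.2 hx).comp x
      (contDiff_graphSlice (r := 1)).contDiffAt).congr_of_eventuallyEq (cutoff_eventuallyEq hx)
  · have hcollar : t < collar x := by
      rw [collar_of_le_norm (by linarith)]
      exact ht.2
    exact contDiffAt_const.congr_of_eventuallyEq
      (hU.cutoff_eventuallyEq_base he hθ hy hu hε ht.1 hcollar)

omit hu in
theorem IsC1Extension.enorm_fderiv_cutoff_le (hε : 0 < ε) (ht : t < 1) (hx : ‖x‖ < 3 / 4)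
    {K : NNReal} (hK : LipschitzWith K (graphSlice (k := k) e θ y t ε)) :
    ‖fderiv ℝ (cutoff b.1 fun x => U (graphSlice e θ y t ε x)) x‖ₑ ≤
      ‖fderiv ℝ U (graphSlice e θ y t ε x)‖ₑ * K := by
  have hdiff : DifferentiableAt ℝ (graphSlice e θ y t ε) x :=
    ((contDiff_graphSlice (r := 1)).differentiable one_ne_zero) x
  have hdiffU : DifferentiableAt ℝ U (graphSlice e θ y t ε x) :=
    (hU.contDiffAt_graphSlice he hθ hy hε ht hx).differentiableAt one_ne_zero
  have hcomp : HasFDerivAt (fun x => U (graphSlice e θ y t ε x)) _ x :=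
    hdiffU.hasFDerivAt.comp x hdiff.hasFDerivAt
  rw [(cutoff_eventuallyEq hx).fderiv_eq, hcomp.fderiv]
  refine (ContinuousLinearMap.opENorm_comp_le _ _).trans ?_
  gcongr
  exact ENNReal.coe_le_coe.2 (norm_fderiv_le_of_lipschitz ℝ hK)

theorem IsC1Extension.dirichletEnergy_cutoff_le {p : ℝ} (hp : 0 < p) (hε : 0 < ε)
    (ht : t ∈ Ico (0 : ℝ) 1) {K : NNReal}
    (hK : LipschitzWith K (graphSlice (k := k) e θ y t ε))
    {G : EuclideanSpace ℝ (Fin n) × ℝ → ℝ≥0∞}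
    (hG : ∀ x ∈ ball 0 1, ∀ s ∈ Ico (0 : ℝ) 1,
      ‖fderiv ℝ U (x, smoothPosPart ε s)‖ₑ ^ p ≤ G (x, s)) :
    dirichletEnergy p (cutoff b.1 fun x => U (graphSlice e θ y t ε x)) ≤
      K ^ p * ∫⁻ x in ball (0 : CubeSpace k) (3 / 4), G (e.symm (slice θ y x), t - collar x) := by
  rw [← lintegral_const_mul' _ _ (by finiteness), ← lintegral_indicator measurableSet_ball]
  refine lintegral_mono fun x => ?_
  rcases lt_or_ge t (collar x) with htx | htx
  · have hzero : fderiv ℝ (cutoff b.1 fun x => U (graphSlice e θ y t ε x)) x = 0 := by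
      rw [(hU.cutoff_eventuallyEq_base he hθ hy hu hε ht.1 htx).fderiv_eq, fderiv_const_apply]
    exact (enorm_fderiv_rpow_eq_zero hp hzero).trans_le zero_le
  · have hx : ‖x‖ < 3 / 4 := by
      by_contra! hge
      linarith [collar_of_le_norm (show 5 / 8 ≤ ‖x‖ by linarith), ht.2]
    rw [indicator_of_mem (mem_ball_zero_iff.2 hx)]
    calc _ ≤ (‖fderiv ℝ U (graphSlice e θ y t ε x)‖ₑ * K) ^ p := by
          gcongr
          exact hU.enorm_fderiv_cutoff_le he hθ hy hε ht.2 hx hK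
      _ = K ^ p * ‖fderiv ℝ U (graphSlice e θ y t ε x)‖ₑ ^ p := by
          rw [mul_comm, ENNReal.mul_rpow_of_nonneg _ _ hp.le]
      _ ≤ _ := by
          gcongr
          exact hG _ (symm_slice_mem_ball he hθ hy hx) _
            ⟨sub_nonneg.2 htx, by linarith [collar_nonneg x, ht.2]⟩

end Homotopy

end GraphSlice

section Extension

variable {n k d ν : ℕ} {N : Set (EuclideanSpace ℝ (Fin ν))} {b : N} {p : ℝ}
  {e : EuclideanSpace ℝ (Fin n) ≃L[ℝ] TubeSpace k d}

theorem exists_classEnergy_le_isC1Extension [NeZero d] (he : ∀ x, ‖e x‖ ≤ 15 → ‖x‖ < 1)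
    (hp : 0 < p) : ∃ C : ℝ≥0∞, C ≠ ⊤ ∧ ∀ (f : CubeLoop k b)
      (u : EuclideanSpace ℝ (Fin n) → EuclideanSpace ℝ (Fin ν)),
      (∀ x, 6 ≤ ‖(e x).2‖ → u x = f (tubeCoord (e x))) → ∀ U, IsC1Extension N U u →
        classEnergy p f.homotopyClass ≤
          C * ((∫⁻ z in ball 0 1 ×ˢ Ioo (0 : ℝ) 1, ‖fderiv ℝ U z‖ₑ ^ p) + 1) := by
  let θ : EuclideanSpace ℝ (Fin d) := EuclideanSpace.single 0 1
  have hθ : ‖θ‖ = 1 := by rw [PiLp.norm_single, norm_one]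
  obtain ⟨K, hK⟩ := exists_lipschitzWith_graphSlice e hθ
  obtain ⟨C, hC, hslice⟩ := exists_slice_lintegral_le e θ
  refine ⟨K ^ p * C, by finiteness, fun f u hu U hU => ?_⟩
  obtain ⟨ε, hε, G, hG, hGU, hGle⟩ := hU.exists_majorant hp.le
  obtain ⟨y, hy, t, ht, hle⟩ := hslice collar (contDiff_collar (r := 0)).continuous G hG
  have hy' : ‖y‖ ≤ 1 := (mem_ball_zero_iff.1 hy).le
  have ht' : t ∈ Ico (0 : ℝ) 1 := ⟨by linarith [ht.1], ht.2⟩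
  obtain ⟨w, hwf, hw⟩ := hU.exists_cubeLoop_eq_cutoff he hθ hy' hu hε ht.2
  calc classEnergy p f.homotopyClass = classEnergy p w.homotopyClass := by rw [hwf]
    _ ≤ dirichletEnergy p w :=
      classEnergy_homotopyClass_le (hw ▸ hU.contDiff_cutoff he hθ hy' hu hε ht')
    _ ≤ K ^ p * ∫⁻ x in ball (0 : CubeSpace k) (3 / 4), G (e.symm (slice θ y x), t - collar x) :=
      hw ▸ hU.dirichletEnergy_cutoff_le he hθ hy' hu hp hε ht' (hK y t ε hε) hGU
    _ ≤ K ^ p * (C * ∫⁻ z, G z) := by gcongr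
    _ = K ^ p * C * ∫⁻ z, G z := (mul_assoc _ _ _).symm
    _ ≤ _ := by gcongr

theorem exists_classEnergy_le_extEnergy [NeZero d] (he : ∀ x, ‖e x‖ ≤ 15 → ‖x‖ < 1)
    (hp : 0 < p) : ∃ C : ℝ≥0∞, C ≠ ⊤ ∧ ∀ (f : CubeLoop k b)
      (u : EuclideanSpace ℝ (Fin n) → EuclideanSpace ℝ (Fin ν)),
      (∀ x, 6 ≤ ‖(e x).2‖ → u x = f (tubeCoord (e x))) →
        classEnergy p f.homotopyClass ≤ C * (extEnergy p N u + 1) := by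
  obtain ⟨C, hC, hle⟩ := exists_classEnergy_le_isC1Extension (b := b) he hp
  refine ⟨C + 1, by finiteness, fun f u hu => ?_⟩
  have hC₀ : C + 1 ≠ 0 := (zero_lt_one.trans_le le_add_self).ne'
  refine (ENNReal.div_le_iff' hC₀ (by finiteness)).1 (tsub_le_iff_right.1 (le_sInf ?_))
  rintro _ ⟨U, hreg, hmaps, hzero, rfl⟩
  refine tsub_le_iff_right.2 ((ENNReal.div_le_iff' hC₀ (by finiteness)).2 ?_)
  simp only [ofReal_norm_rpow _ hp.le]
  exact (hle f u hu U ⟨hreg, hmaps, hzero⟩).trans (by gcongr; exact le_self_add)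

end Extension

/-! ### Conclusion -/

section Conclusion

theorem exists_nat_forall_mul_rpow_le {s : ℝ} (hs₀ : 0 < s) (hs₁ : s < 1) {A C : ℝ≥0∞}
    (hA : A ≠ ⊤) (hC : C ≠ ⊤) :
    ∃ J : ℕ, ∀ X E : ℝ≥0∞, J ≤ X → X ≤ C * (E + 1) → A * X ^ s ≤ E := by
  have hs : 0 < 1 - s := sub_pos.2 hs₁
  obtain ⟨J, hJ⟩ := ENNReal.exists_nat_gt
    (show (C * (A + 1)) ^ (1 - s)⁻¹ ≠ ⊤ from
      ENNReal.rpow_ne_top_of_nonneg (inv_nonneg.2 hs.le) (by finiteness))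
  refine ⟨J + 1, fun X E hJX hX => ?_⟩
  by_contra! hlt
  have hX₁ : 1 ≤ X := le_trans (by simp) hJX
  have hX_top : X ≠ ⊤ := ne_top_of_le_ne_top (ENNReal.mul_ne_top hC (by finiteness)) hX
  have hle : X ≤ C * (A + 1) * X ^ s :=
    calc X ≤ C * (E + 1) := hX
      _ ≤ C * (A * X ^ s + X ^ s) := by
        gcongr
        exact ENNReal.one_le_rpow hX₁ hs₀
      _ = C * (A + 1) * X ^ s := by ring
  have hroot : X ^ (1 - s) ≤ C * (A + 1) := by
    rw [ENNReal.rpow_sub _ _ (one_pos.trans_le hX₁).ne' hX_top, ENNReal.rpow_one]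
    exact ENNReal.div_le_of_le_mul hle
  have hXJ : X ≤ J := ((ENNReal.le_rpow_inv_iff hs).2 hroot).trans hJ.le
  have hJJ : ((J + 1 : ℕ) : ℝ≥0∞) ≤ J := hJX.trans hXJ
  exact absurd (Nat.cast_le.1 hJJ) (by lia)

variable {k ν : ℕ} {N : Set (EuclideanSpace ℝ (Fin ν))} {b : N} {p : ℝ}

theorem CubeLoop.exists_ne_base_of_classEnergy_pos {f : CubeLoop k b} (hp : 0 < p)
    (hf : 0 < classEnergy p f.homotopyClass) : ∃ z, f z ≠ b := by
  by_contra! hbase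
  have hconst : ⇑f = fun _ => (b : EuclideanSpace ℝ (Fin ν)) := funext hbase
  refine (hf.trans_le (classEnergy_homotopyClass_le (hconst ▸ contDiff_const))).ne' ?_
  rw [hconst]
  exact (lintegral_congr fun x => enorm_fderiv_rpow_eq_zero hp (fderiv_const_apply _)).trans
    lintegral_zero

theorem exists_seq_cubeLoop_lt_classEnergy (hN : IsCompact N) (hsub : IsSmoothSubmanifold N)
    (hp : (k : ℝ) + 1 < p) [Infinite (HomotopyGroup (Fin (k + 1)) N b)] :
    ∃ C : ℝ≥0∞, C ≠ ⊤ ∧ ∃ f : ℕ → CubeLoop k b, ∀ j, ContDiff ℝ (⊤ : ℕ∞) (f j) ∧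
      j < classEnergy p (f j).homotopyClass ∧
      dirichletEnergy p (f j) ≤ C * (classEnergy p (f j).homotopyClass + 1) := by
  have hp₁ : 1 ≤ p := by linarith [k.cast_nonneg (α := ℝ)]
  obtain ⟨C, hC, hle⟩ := exists_smooth_dirichletEnergy_le_classEnergy (k := k) (b := b) hN hsub hp₁
  refine ⟨C, hC, ?_⟩
  choose α hα using fun j : ℕ =>
    (finite_setOf_classEnergy_le (k := k) (b := b) hN hsub hp
      (ENNReal.natCast_ne_top j)).exists_notMem
  choose f hf hclass hfC using fun j => hle (α j)
  refine ⟨f, fun j => ⟨hf j, ?_, ?_⟩⟩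
  · rw [hclass]
    exact not_le.1 (hα j)
  · rw [hclass]
    exact hfC j

end Conclusion

section Tube

variable {n k d ν : ℕ} {N : Set (EuclideanSpace ℝ (Fin ν))} {b : N} {p : ℝ}
  {e : EuclideanSpace ℝ (Fin n) ≃L[ℝ] TubeSpace k d}

theorem exists_nat_forall_gagliardoE_tubeMap_le_extEnergy [NeZero n] [NeZero d]
    (hN : IsCompact N) (hp : 1 < p) (he : ∀ x, ‖e x‖ ≤ 15 → ‖x‖ < 1) {f₀ : CubeLoop k b}
    (hf₀ : ContDiff ℝ 1 f₀) {C : ℝ≥0∞} (hC : C ≠ ⊤) (M : ℝ) :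
    ∃ J : ℕ, ∀ f : CubeLoop k b, ContDiff ℝ 1 f → J ≤ classEnergy p f.homotopyClass →
      dirichletEnergy p f ≤ C * (classEnergy p f.homotopyClass + 1) →
        ENNReal.ofReal M * gagliardoE (1 - 1 / p) p (ball 0 1) (tubeMap e f f₀) ≤
          extEnergy p N (tubeMap e f f₀) := by
  have hs : 1 - 1 / p ∈ Ioo (0 : ℝ) 1 :=
    ⟨sub_pos.2 ((div_lt_one (by linarith)).2 hp), sub_lt_self _ (by positivity)⟩
  obtain ⟨A, hA, hgag⟩ := exists_gagliardoE_tubeMap_le hN hp.le hs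
    (measure_ball_lt_top (μ := volume) (x := 0) (r := 1)).ne e hf₀
  obtain ⟨B, hB, hext⟩ := exists_classEnergy_le_extEnergy (N := N) (b := b) he
    (zero_lt_one.trans hp)
  obtain ⟨J, hJ⟩ := exists_nat_forall_mul_rpow_le hs.1 hs.2
    (A := ENNReal.ofReal M * (A * (1 + C) ^ (1 - 1 / p))) (C := B + 1)
    (ENNReal.mul_ne_top (by finiteness) (ENNReal.mul_ne_top hA
      (ENNReal.rpow_ne_top_of_nonneg hs.1.le (by finiteness)))) (by finiteness)
  refine ⟨J, fun f hf hJf hfC => ?_⟩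
  set X := classEnergy p f.homotopyClass
  calc ENNReal.ofReal M * gagliardoE (1 - 1 / p) p (ball 0 1) (tubeMap e f f₀)
      ≤ ENNReal.ofReal M * (A * (1 + C * (X + 1)) ^ (1 - 1 / p)) := by
        gcongr
        refine (hgag f hf).trans ?_
        gcongr
        exact hs.1.le
    _ ≤ ENNReal.ofReal M * (A * ((1 + C) * (X + 1)) ^ (1 - 1 / p)) := by
        gcongr
        · exact hs.1.le
        · rw [add_mul, one_mul]
          gcongr
          exact le_add_self
    _ = ENNReal.ofReal M * (A * (1 + C) ^ (1 - 1 / p)) * (X + 1) ^ (1 - 1 / p) := by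
        rw [ENNReal.mul_rpow_of_nonneg _ _ hs.1.le]
        ring
    _ ≤ extEnergy p N (tubeMap e f f₀) := by
        refine hJ _ _ (hJf.trans le_self_add) ?_
        rw [add_mul, one_mul]
        gcongr
        · exact hext f _ fun x hx => tubeMap_of_six_le hx
        · exact le_add_self

end Tube

theorem statement0_general {n ν : ℕ} {N : Set (EuclideanSpace ℝ (Fin ν))} (hN : IsCompact N)
    (hsub : IsSmoothSubmanifold N) {b : EuclideanSpace ℝ (Fin ν)} (hb : b ∈ N) {p : ℝ} {l : ℕ}
    (hl : 1 ≤ l) (hln : l ≤ n) (hlp : (l : ℝ) < p)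
    (hπ : Infinite (HomotopyGroup (Fin l) N ⟨b, hb⟩)) :
    ∃ u : ℕ → EuclideanSpace ℝ (Fin n) → EuclideanSpace ℝ (Fin ν),
      (∀ j, SmoothOnNhd (u j) (closedBall 0 1)) ∧
      (∀ j, MapsTo (u j) (closedBall 0 1) N) ∧
      (∀ j, ∀ x ∈ sphere 0 1, u j x = b) ∧
      0 < atTop.liminf (fun j => gagliardoE (1 - 1 / p) p (ball 0 1) (u j)) ∧
      ∀ M : ℝ, 0 < M → ∃ J : ℕ, ∀ j, J ≤ j →
        ENNReal.ofReal M * gagliardoE (1 - 1 / p) p (ball 0 1) (u j) ≤ extEnergy p N (u j) := by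
  obtain ⟨k, rfl⟩ : ∃ k, l = k + 1 := ⟨l - 1, by lia⟩
  have hp : 1 < p := by
    push_cast at hlp
    linarith [k.cast_nonneg (α := ℝ)]
  have : NeZero n := ⟨by lia⟩
  have : NeZero (n - k) := ⟨by lia⟩
  obtain ⟨e, he⟩ := exists_equiv_tubeSpace (show n = k + (n - k) by lia) 15
  obtain ⟨C, hC, f, hf⟩ := exists_seq_cubeLoop_lt_classEnergy hN hsub (mod_cast hlp)
    (b := ⟨b, hb⟩)
  choose hsmooth hlt hfC using hf
  have hf₁ (j : ℕ) : ContDiff ℝ 1 (f j) := (hsmooth j).of_le (mod_cast le_top)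
  obtain ⟨z, hz⟩ := CubeLoop.exists_ne_base_of_classEnergy_pos (zero_lt_one.trans hp)
    (zero_le.trans_lt (hlt 0))
  obtain ⟨c, hc, hcle⟩ := exists_pos_forall_le_gagliardoE_tubeMap he (by linarith) hz
  refine ⟨fun j => tubeMap e (f j) (f 0), fun j => ?_, fun j x _ => tubeMap_mem x,
    fun j x hx => tubeMap_of_fifteen_lt ?_, hc.trans_le ?_, fun M _ => ?_⟩
  · exact ⟨univ, isOpen_univ, subset_univ _,
      (contDiff_tubeMap (hsmooth j) (hsmooth 0)).contDiffOn⟩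
  · by_contra! hle
    exact (he x hle).ne (mem_sphere_zero_iff_norm.1 hx)
  · exact le_liminf_of_le (by isBoundedDefault) (Eventually.of_forall fun j => hcle (f j))
  · obtain ⟨J, hJ⟩ := exists_nat_forall_gagliardoE_tubeMap_le_extEnergy hN hp he (hf₁ 0) hC M
    exact ⟨J, fun j hj => hJ (f j) (hf₁ j) ((Nat.cast_le.2 hj).trans (hlt j).le) (hfC j)⟩

open scoped Topology in
/-- if `ℓ < p - 1` and `π_ℓ(N, b)` is infinite, there is a sequence of smooth maps
`u_j : B̄^{m-1} → N`, equal to `b` on `S^{m-2}`, whose fractional energies stay bounded away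
from `0` while the ratio `E^{1,p}_ext(u_j) / E^{1-1/p,p}(u_j)` tends to `∞`. -/
theorem statement0 (ν : ℕ) (hν : 1 ≤ ν) (N : Set (EuclideanSpace ℝ (Fin ν)))
    (hNcpt : IsCompact N) (hNconn : IsConnected N) (hNsub : IsSmoothSubmanifold N)
    (b : EuclideanSpace ℝ (Fin ν)) (hb : b ∈ N)
    (m : ℕ) (hm : 2 ≤ m) (p : ℝ) (l : ℕ) (hl : 1 ≤ l) (hlm : l ≤ m - 1)
    (hlp : (l : ℝ) < p - 1)
    (hπ : Infinite (HomotopyGroup (Fin l) ↥N ⟨b, hb⟩)) :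
    ∃ u : ℕ → EuclideanSpace ℝ (Fin (m - 1)) → EuclideanSpace ℝ (Fin ν),
      (∀ j, SmoothOnNhd (u j) (closedBall 0 1)) ∧
      (∀ j, MapsTo (u j) (closedBall 0 1) N) ∧
      (∀ j, ∀ x ∈ sphere (0 : EuclideanSpace ℝ (Fin (m - 1))) 1, u j x = b) ∧
      0 < Filter.atTop.liminf (fun j => gagliardoE (1 - 1 / p) p (ball 0 1) (u j)) ∧
      (∀ M : ℝ, 0 < M → ∃ J : ℕ, ∀ j, J ≤ j →
        ENNReal.ofReal M * gagliardoE (1 - 1 / p) p (ball 0 1) (u j)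
          ≤ extEnergy p N (u j)) :=
  statement0_general hNcpt hNsub hb hl hlm (hlp.trans (sub_one_lt p)) hπ

end
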